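/- arXiv:2304.06108 — 3 statements merged into one kernel-verified Lean document; each statement's English description precedes it below -/
import Mathlib

section
/- Let P, Q ∈ L¹(0,π) be complex-valued and let λ ∈ ℂ. Define e₁₂(t,λ) = −i e^{iλt} ∑_{n=0}^∞ pₙ(t,λ) and e₂₂(t,λ) = e^{−iλt} ∑_{n=0}^∞ hₙ(t,λ). Then for every t ∈ [0,π] the pair satisfies the Volterra integral system e₁₂(t,λ) = −i e^{iλt} ∫₀^t e^{−iλs} P(s) e₂₂(s,λ) ds and e₂₂(t,λ) = e^{−iλt} + i e^{−iλt} ∫₀^t e^{iλs} Q(s) e₁₂(s,λ) ds (equivalently, (e₁₂, e₂₂) is a solution of the Dirac system −i y₁′ + P y₂ = λ y₁, i y₂′ + Q y₁ = λ y₂ with initial data y₁(0) = 0, y₂(0) = 1). -/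
/-!
Put `a(s) = e^{-2iλs} P(s)` and `b(s) = e^{2iλs} Q(s)`. The two families of iterated integrals are
interlaced: `pₙ(t) = ∫₀^t a hₙ` (`pIter_eq`) and `h_{n+1}(t) = ∫₀^t b pₙ` (`hIter_succ_eq`).
Summing these identities over `n` and exchanging sum and integral gives the Volterra system once
the exponential factors are collected.

The exchange rests on the estimates `‖hₙ(t)‖ ≤ W(t)^{2n}/(2n)!` and
`‖pₙ(t)‖ ≤ W(t)^{2n+1}/(2n+1)!` (`iter_bounds`), where `W(t) = ∫₀^t (‖a‖ + ‖b‖)`. They follow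
inductively from `∫₀^t w Wⁿ = W(t)^{n+1}/(n+1)` (`integral_mul_primitive_pow`), which for a merely
integrable density `w` is the fundamental theorem of calculus for the absolutely continuous
function `W^{n+1}`. Since `W` is bounded by `W(π)` on `[0,π]`, the terms are dominated by an
integrable function times a summable sequence (`integral_mul_tsum`).
-/

open MeasureTheory Real intervalIntegral

/-- The iterated integrals `pₙ(t,λ)`. -/
noncomputable def pIter (P Q : ℝ → ℂ) (lam : ℂ) : ℕ → ℝ → ℂ
  | 0, t => ∫ s in (0 : ℝ)..t, Complex.exp (-(2 * Complex.I * lam * (s : ℂ))) * P s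
  | n + 1, t => ∫ t₁ in (0 : ℝ)..t,
      Complex.exp (-(2 * Complex.I * lam * (t₁ : ℂ))) * P t₁ *
        ∫ t₂ in (0 : ℝ)..t₁,
          Complex.exp (2 * Complex.I * lam * (t₂ : ℂ)) * Q t₂ * pIter P Q lam n t₂

/-- The iterated integrals `hₙ(t,λ)`. -/
noncomputable def hIter (P Q : ℝ → ℂ) (lam : ℂ) : ℕ → ℝ → ℂ
  | 0, _ => 1
  | n + 1, t => ∫ t₁ in (0 : ℝ)..t,
      Complex.exp (2 * Complex.I * lam * (t₁ : ℂ)) * Q t₁ *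
        ∫ t₂ in (0 : ℝ)..t₁,
          Complex.exp (-(2 * Complex.I * lam * (t₂ : ℂ))) * P t₂ * hIter P Q lam n t₂

/-- The weight `e^{-2iλs} P(s)`. -/
noncomputable def aWeight (P : ℝ → ℂ) (lam : ℂ) (s : ℝ) : ℂ :=
  Complex.exp (-(2 * Complex.I * lam * (s : ℂ))) * P s

/-- The weight `e^{2iλs} Q(s)`. -/
noncomputable def bWeight (Q : ℝ → ℂ) (lam : ℂ) (s : ℝ) : ℂ :=
  Complex.exp (2 * Complex.I * lam * (s : ℂ)) * Q s

lemma pIter_eq (P Q : ℝ → ℂ) (lam : ℂ) (n : ℕ) (t : ℝ) :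
    pIter P Q lam n t = ∫ s in (0 : ℝ)..t, aWeight P lam s * hIter P Q lam n s := by
  induction n generalizing t with
  | zero => simp [pIter, hIter, aWeight]
  | succ n ih =>
    simp only [pIter, hIter, aWeight] at ih ⊢
    simp only [ih]

lemma hIter_succ_eq (P Q : ℝ → ℂ) (lam : ℂ) (n : ℕ) (t : ℝ) :
    hIter P Q lam (n + 1) t = ∫ s in (0 : ℝ)..t, bWeight Q lam s * pIter P Q lam n s := by
  simp only [pIter_eq, hIter, aWeight, bWeight]

/-- For an integrable density, `∫₀^t w Wⁿ = W(t)^{n+1}/(n+1)` where `W` is the primitive of `w`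
vanishing at `0`: the power `W^{n+1}` is absolutely continuous with a.e. derivative
`(n+1) Wⁿ w`. -/
lemma integral_mul_primitive_pow {w : ℝ → ℝ} {t : ℝ}
    (hw : IntervalIntegrable w volume 0 t) (n : ℕ) :
    ∫ s in (0 : ℝ)..t, w s * (∫ x in (0 : ℝ)..s, w x) ^ n
      = (∫ x in (0 : ℝ)..t, w x) ^ (n + 1) / (n + 1) := by
  have hW : AbsolutelyContinuousOnInterval (fun s => ∫ x in (0 : ℝ)..s, w x) 0 t :=
    hw.absolutelyContinuousOnInterval_intervalIntegral (by simp)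
  have hpow : ∀ m : ℕ, AbsolutelyContinuousOnInterval
      (fun s => (∫ x in (0 : ℝ)..s, w x) ^ (m + 1)) 0 t := by
    intro m
    induction m with
    | zero => simpa using hW
    | succ m ih => simpa only [pow_succ _ (m + 1)] using ih.fun_mul hW
  have hFTC := (hpow n).integral_deriv_eq_sub
  have hcongr : ∫ s in (0 : ℝ)..t, deriv (fun s => (∫ x in (0 : ℝ)..s, w x) ^ (n + 1)) s
      = ∫ s in (0 : ℝ)..t, ((n : ℝ) + 1) * (w s * (∫ x in (0 : ℝ)..s, w x) ^ n) := by
    apply intervalIntegral.integral_congr_ae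
    filter_upwards [hw.ae_hasDerivAt_integral] with x hx hxt
    have := (hx (Set.uIoc_subset_uIcc hxt) 0 (by simp)).fun_pow (n + 1)
    rw [this.deriv]
    push_cast
    ring
  rw [hcongr, intervalIntegral.integral_const_mul] at hFTC
  have hn : (n : ℝ) + 1 ≠ 0 := by positivity
  rw [eq_div_iff hn, mul_comm, hFTC]
  simp

lemma intervalIntegrable_of_mem {E : Type*} [NormedAddCommGroup E] {f : ℝ → E} {t : ℝ}
    (hf : IntervalIntegrable f volume 0 π) (ht : t ∈ Set.Icc (0 : ℝ) π) :
    IntervalIntegrable f volume 0 t := by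
  apply hf.mono_set
  rw [Set.uIcc_of_le ht.1, Set.uIcc_of_le Real.pi_pos.le]
  exact Set.Icc_subset_Icc_right ht.2

/-- One integration against a weight `f` dominated by `w` raises the exponent of the bound
`Wⁿ/n!` by one and preserves continuity. -/
lemma iter_step {f g : ℝ → ℂ} {w : ℝ → ℝ} {n : ℕ}
    (hf : IntervalIntegrable f volume 0 π) (hw : IntervalIntegrable w volume 0 π)
    (hfw : ∀ s, ‖f s‖ ≤ w s) (hg : ContinuousOn g (Set.Icc 0 π))
    (hgb : ∀ s ∈ Set.Icc (0 : ℝ) π, ‖g s‖ ≤ (∫ x in (0 : ℝ)..s, w x) ^ n / n.factorial) :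
    ContinuousOn (fun t => ∫ s in (0 : ℝ)..t, f s * g s) (Set.Icc 0 π) ∧
    ∀ t ∈ Set.Icc (0 : ℝ) π, ‖∫ s in (0 : ℝ)..t, f s * g s‖
      ≤ (∫ x in (0 : ℝ)..t, w x) ^ (n + 1) / (n + 1).factorial := by
  have huIcc : Set.uIcc (0 : ℝ) π = Set.Icc 0 π := Set.uIcc_of_le Real.pi_pos.le
  constructor
  · rw [← huIcc] at hg ⊢
    exact intervalIntegral.continuousOn_primitive_interval' (hf.mul_continuousOn hg) (by simp)
  · intro t ht
    have hwt := intervalIntegrable_of_mem hw ht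
    have hWc : ContinuousOn (fun s => ∫ x in (0 : ℝ)..s, w x) (Set.uIcc 0 t) :=
      intervalIntegral.continuousOn_primitive_interval' hwt (by simp)
    calc ‖∫ s in (0 : ℝ)..t, f s * g s‖
        ≤ ∫ s in (0 : ℝ)..t, (w s * (∫ x in (0 : ℝ)..s, w x) ^ n) / n.factorial := by
          refine intervalIntegral.norm_integral_le_of_norm_le ht.1
            (Filter.Eventually.of_forall fun s hs => ?_)
            ((hwt.mul_continuousOn (hWc.pow n)).div_const _)
          rw [norm_mul, mul_div_assoc]
          exact mul_le_mul (hfw s) (hgb s ⟨hs.1.le, hs.2.trans ht.2⟩) (norm_nonneg _)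
            ((norm_nonneg _).trans (hfw s))
      _ = (∫ x in (0 : ℝ)..t, w x) ^ (n + 1) / (n + 1).factorial := by
          rw [intervalIntegral.integral_div, integral_mul_primitive_pow hwt, div_div,
            Nat.factorial_succ]
          push_cast
          rfl

lemma iter_bounds {P Q : ℝ → ℂ} {lam : ℂ} {w : ℝ → ℝ}
    (ha : IntervalIntegrable (aWeight P lam) volume 0 π)
    (hb : IntervalIntegrable (bWeight Q lam) volume 0 π)
    (hw : IntervalIntegrable w volume 0 π)
    (haw : ∀ s, ‖aWeight P lam s‖ ≤ w s) (hbw : ∀ s, ‖bWeight Q lam s‖ ≤ w s) (n : ℕ) :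
    (ContinuousOn (hIter P Q lam n) (Set.Icc 0 π) ∧ ∀ t ∈ Set.Icc (0 : ℝ) π,
      ‖hIter P Q lam n t‖ ≤ (∫ x in (0 : ℝ)..t, w x) ^ (2 * n) / (2 * n).factorial) ∧
    (ContinuousOn (pIter P Q lam n) (Set.Icc 0 π) ∧ ∀ t ∈ Set.Icc (0 : ℝ) π,
      ‖pIter P Q lam n t‖
        ≤ (∫ x in (0 : ℝ)..t, w x) ^ (2 * n + 1) / (2 * n + 1).factorial) := by
  have hp : ∀ m, pIter P Q lam m = fun t => ∫ s in (0 : ℝ)..t,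
      aWeight P lam s * hIter P Q lam m s := fun m => funext (pIter_eq P Q lam m)
  have hh : ∀ m, hIter P Q lam (m + 1) = fun t => ∫ s in (0 : ℝ)..t,
      bWeight Q lam s * pIter P Q lam m s := fun m => funext (hIter_succ_eq P Q lam m)
  induction n with
  | zero =>
    have h0 : ContinuousOn (hIter P Q lam 0) (Set.Icc 0 π) ∧ ∀ t ∈ Set.Icc (0 : ℝ) π,
        ‖hIter P Q lam 0 t‖ ≤ (∫ x in (0 : ℝ)..t, w x) ^ (2 * 0) / (2 * 0).factorial := by
      have : hIter P Q lam 0 = fun _ => 1 := by funext t; simp [hIter]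
      rw [this]
      exact ⟨continuousOn_const, by simp⟩
    refine ⟨h0, ?_⟩
    rw [hp]
    exact iter_step ha hw haw h0.1 h0.2
  | succ n ih =>
    have h1 : ContinuousOn (hIter P Q lam (n + 1)) (Set.Icc 0 π) ∧ ∀ t ∈ Set.Icc (0 : ℝ) π,
        ‖hIter P Q lam (n + 1) t‖
          ≤ (∫ x in (0 : ℝ)..t, w x) ^ (2 * (n + 1)) / (2 * (n + 1)).factorial := by
      rw [hh]
      exact iter_step hb hw hbw ih.2.1 ih.2.2
    refine ⟨h1, ?_⟩
    rw [hp]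
    exact iter_step ha hw haw h1.1 h1.2

lemma integral_mul_tsum {f : ℝ → ℂ} {g : ℕ → ℝ → ℂ} {c : ℕ → ℝ} {t : ℝ}
    (hf : IntervalIntegrable f volume 0 π) (hg : ∀ n, ContinuousOn (g n) (Set.Icc 0 π))
    (hc : Summable c) (hgc : ∀ n, ∀ s ∈ Set.Icc (0 : ℝ) π, ‖g n s‖ ≤ c n)
    (ht : t ∈ Set.Icc (0 : ℝ) π) :
    ∑' n, ∫ s in (0 : ℝ)..t, f s * g n s = ∫ s in (0 : ℝ)..t, f s * ∑' n, g n s := by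
  have hft := intervalIntegrable_of_mem hf ht
  have hmem : ∀ s ∈ Set.uIoc 0 t, s ∈ Set.Icc (0 : ℝ) π := by
    intro s hs
    rw [Set.uIoc_of_le ht.1] at hs
    exact ⟨hs.1.le, hs.2.trans ht.2⟩
  have hgt : ∀ n, ContinuousOn (g n) (Set.uIcc 0 t) := fun n => (hg n).mono (by
    rw [Set.uIcc_of_le ht.1]
    exact Set.Icc_subset_Icc_right ht.2)
  refine HasSum.tsum_eq (intervalIntegral.hasSum_integral_of_dominated_convergence
    (fun n s => ‖f s‖ * c n) ?_ ?_ ?_ ?_ ?_)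
  · intro n
    exact (hft.mul_continuousOn (hgt n)).aestronglyMeasurable_restrict_uIoc
  · refine fun n => Filter.Eventually.of_forall fun s hs => ?_
    rw [norm_mul]
    exact mul_le_mul_of_nonneg_left (hgc n s (hmem s hs)) (norm_nonneg _)
  · exact Filter.Eventually.of_forall fun s _ => hc.mul_left _
  · simp only [tsum_mul_left]
    exact hft.norm.mul_const _
  · refine Filter.Eventually.of_forall fun s hs => ?_
    exact (Summable.of_norm_bounded hc fun n => hgc n s (hmem s hs)).hasSum.mul_left _

/-- Lemma 2 (for the pair `(e₁₂, e₂₂)`): the functions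
`e₁₂(t,λ) = -i e^{iλt} ∑ₙ pₙ(t,λ)` and `e₂₂(t,λ) = e^{-iλt} ∑ₙ hₙ(t,λ)` satisfy the
Volterra integral system
`e₁₂(t,λ) = -i e^{iλt} ∫₀^t e^{-iλs} P(s) e₂₂(s,λ) ds`,
`e₂₂(t,λ) = e^{-iλt} + i e^{-iλt} ∫₀^t e^{iλs} Q(s) e₁₂(s,λ) ds`
on `[0,π]`, i.e. `(e₁₂, e₂₂)` solves the Dirac system with data `y₁(0)=0, y₂(0)=1`. -/
theorem e12_e22_solve_volterra_system
    (P Q : ℝ → ℂ)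
    (hP : IntervalIntegrable P MeasureTheory.volume 0 Real.pi)
    (hQ : IntervalIntegrable Q MeasureTheory.volume 0 Real.pi)
    (lam : ℂ)
    (e12 e22 : ℝ → ℂ)
    (he12 : ∀ t : ℝ, e12 t =
      -Complex.I * Complex.exp (Complex.I * lam * (t : ℂ)) * ∑' n : ℕ, pIter P Q lam n t)
    (he22 : ∀ t : ℝ, e22 t =
      Complex.exp (-(Complex.I * lam * (t : ℂ))) * ∑' n : ℕ, hIter P Q lam n t) :
    ∀ t ∈ Set.Icc (0 : ℝ) Real.pi,
      (e12 t = -Complex.I * Complex.exp (Complex.I * lam * (t : ℂ)) *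
          ∫ s in (0 : ℝ)..t,
            Complex.exp (-(Complex.I * lam * (s : ℂ))) * P s * e22 s) ∧
      (e22 t = Complex.exp (-(Complex.I * lam * (t : ℂ))) +
          Complex.I * Complex.exp (-(Complex.I * lam * (t : ℂ))) *
            ∫ s in (0 : ℝ)..t,
              Complex.exp (Complex.I * lam * (s : ℂ)) * Q s * e12 s) := by
  have ha : IntervalIntegrable (aWeight P lam) volume 0 π :=
    hP.continuousOn_mul (g := fun s : ℝ => Complex.exp (-(2 * Complex.I * lam * (s : ℂ))))
      (by fun_prop)
  have hb : IntervalIntegrable (bWeight Q lam) volume 0 π :=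
    hQ.continuousOn_mul (g := fun s : ℝ => Complex.exp (2 * Complex.I * lam * (s : ℂ)))
      (by fun_prop)
  set w : ℝ → ℝ := fun s => ‖aWeight P lam s‖ + ‖bWeight Q lam s‖ with hw_def
  have hw0 : ∀ s, 0 ≤ w s := fun s => by positivity
  have hw : IntervalIntegrable w volume 0 π := ha.norm.add hb.norm
  have hB := iter_bounds ha hb hw (fun s => le_add_of_nonneg_right (norm_nonneg _))
    (fun s => le_add_of_nonneg_left (norm_nonneg _))
  set M : ℝ := ∫ x in (0 : ℝ)..π, w x
  have hWM : ∀ s ∈ Set.Icc (0 : ℝ) π, ∀ k : ℕ,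
      (∫ x in (0 : ℝ)..s, w x) ^ k / k.factorial ≤ M ^ k / k.factorial := by
    intro s hs k
    have h0 : 0 ≤ ∫ x in (0 : ℝ)..s, w x := intervalIntegral.integral_nonneg hs.1 fun x _ => hw0 x
    have h1 : ∫ x in (0 : ℝ)..s, w x ≤ M :=
      intervalIntegral.integral_mono_interval le_rfl hs.1 hs.2
        (Filter.Eventually.of_forall hw0) hw
    gcongr
  have hexp := Real.summable_pow_div_factorial M
  have hc_even : Summable fun n : ℕ => M ^ (2 * n) / (2 * n).factorial :=
    hexp.comp_injective (i := fun n : ℕ => 2 * n) fun m n h => by simpa using h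
  have hc_odd : Summable fun n : ℕ => M ^ (2 * n + 1) / (2 * n + 1).factorial :=
    hexp.comp_injective (i := fun n : ℕ => 2 * n + 1) fun m n h => by simpa using h
  have hh_le : ∀ n, ∀ s ∈ Set.Icc (0 : ℝ) π,
      ‖hIter P Q lam n s‖ ≤ M ^ (2 * n) / (2 * n).factorial :=
    fun n s hs => ((hB n).1.2 s hs).trans (hWM s hs _)
  have hp_le : ∀ n, ∀ s ∈ Set.Icc (0 : ℝ) π,
      ‖pIter P Q lam n s‖ ≤ M ^ (2 * n + 1) / (2 * n + 1).factorial :=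
    fun n s hs => ((hB n).2.2 s hs).trans (hWM s hs _)
  intro t ht
  have hp_sum : ∑' n, pIter P Q lam n t
      = ∫ s in (0 : ℝ)..t, aWeight P lam s * ∑' n, hIter P Q lam n s := by
    rw [← integral_mul_tsum ha (fun n => (hB n).1.1) hc_even hh_le ht]
    exact tsum_congr fun n => pIter_eq P Q lam n t
  have hh_sum : ∑' n, hIter P Q lam n t
      = 1 + ∫ s in (0 : ℝ)..t, bWeight Q lam s * ∑' n, pIter P Q lam n s := by
    rw [← integral_mul_tsum hb (fun n => (hB n).2.1) hc_odd hp_le ht,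
      (Summable.of_norm_bounded hc_even fun n => hh_le n t ht).tsum_eq_zero_add]
    congr 1
    exact tsum_congr fun n => hIter_succ_eq P Q lam n t
  constructor
  · rw [he12, hp_sum]
    congr 1
    refine intervalIntegral.integral_congr fun s _ => ?_
    simp only [he22, aWeight]
    have : Complex.exp (-(2 * Complex.I * lam * (s : ℂ)))
        = Complex.exp (-(Complex.I * lam * s)) * Complex.exp (-(Complex.I * lam * s)) := by
      rw [← Complex.exp_add]
      ring_nf
    rw [this]
    ring
  · have hint : ∫ s in (0 : ℝ)..t, Complex.exp (Complex.I * lam * (s : ℂ)) * Q s * e12 s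
        = -Complex.I * ∫ s in (0 : ℝ)..t, bWeight Q lam s * ∑' n, pIter P Q lam n s := by
      rw [← intervalIntegral.integral_const_mul]
      refine intervalIntegral.integral_congr fun s _ => ?_
      simp only [he12, bWeight]
      have : Complex.exp (2 * Complex.I * lam * (s : ℂ))
          = Complex.exp (Complex.I * lam * s) * Complex.exp (Complex.I * lam * s) := by
        rw [← Complex.exp_add]
        ring_nf
      rw [this]
      ring
    rw [he22, hh_sum, hint]
    linear_combination (Complex.exp (-(Complex.I * lam * (t : ℂ))) *
      ∫ s in (0 : ℝ)..t, bWeight Q lam s * ∑' n, pIter P Q lam n s) * Complex.I_mul_I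
end

section
/- Let P ∈ L¹(0,π) be complex-valued, let ρ > 0, and suppose lim_{h→0⁺} ( ∫_{π−h}^{π} P(x) dx ) / h^ρ = ν with ν ≠ 0. Fix 0 < ε < π/10. Then, uniformly for λ in the sector Ω_ε⁺, as |Im λ| → ∞: −i e^{iπλ} p₀(π,λ) = −ν λ e^{−iπλ} Γ(ρ+1) / ( 2^ρ ((Re λ)² + (Im λ)²)^{(ρ+1)/2} ) · e^{i(ρ+1) arctan(Re λ / Im λ)} + e^{π|Im λ|} o(1) / |Im λ|^ρ; that is, |Im λ|^ρ e^{−π|Im λ|} times the difference of the two sides tends to 0 uniformly on Ω_ε⁺. -/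
open MeasureTheory Real intervalIntegral

/-!
Write `F t = ∫ x in π - t..π, P x`, so that `F t ~ ν t ^ ρ` as `t → 0⁺`. Integrating by parts
(`integral_exp_mul_eq_of_tail`) and substituting `s = π - t` turns `p₀(π, λ)` into
`F π - 2iλ e^{-2iπλ} ∫ t in 0..π, e^{2iλt} F t`. Replacing `F t` by `ν t ^ ρ` on the whole half-line
gives a Gamma integral with complex parameter `-2iλ`, of positive real part `2 Im λ`
(`laplace_rpow`), and its polar form (`two_mul_cpow_eq`) is exactly the stated main term.

What remains (`p0_sub_main_eq`) is the boundary term `-i e^{iπλ} F π`, which is exponentially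
smaller than `e^{π Im λ}`, and `2λ e^{-iπλ}` times the Laplace transform of `F t - ν t ^ ρ`. By
`tail_estimates` and `norm_laplace_le` that transform is `o((Im λ)^{-ρ-1})`, in terms of `Im λ`
alone, and in the sector `|λ| ≤ Im λ / sin ε`, so the error is uniformly
`e^{π Im λ} o((Im λ)^{-ρ})`.
-/

/-! ### The Laplace transform of a power -/

/-- The Laplace transform of `t ^ ρ` at complex `z` in the right half-plane. It is known for real `z`
and extends to the half-plane by the identity theorem, both sides being holomorphic there. -/
lemma laplace_rpow {ρ : ℝ} (hρ : 0 < ρ) {z : ℂ} (hz : 0 < z.re) :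
    IntegrableOn (fun t : ℝ => Complex.exp (-(z * t)) * ((t ^ ρ : ℝ) : ℂ)) (Set.Ioi 0) ∧
    ∫ t in Set.Ioi (0 : ℝ), Complex.exp (-(z * t)) * ((t ^ ρ : ℝ) : ℂ) =
      z ^ (-((ρ : ℂ) + 1)) * (Real.Gamma (ρ + 1) : ℂ) := by
  have hmeas (σ : ℝ) (z : ℂ) : AEStronglyMeasurable
      (fun t : ℝ => Complex.exp (-(z * t)) * ((t ^ σ : ℝ) : ℂ))
      (volume.restrict (Set.Ioi 0)) := by
    refine Measurable.aestronglyMeasurable ?_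
    fun_prop
  have hreal (σ r : ℝ) (hσ : 0 < σ) (hr : 0 < r) :
      IntegrableOn (fun t : ℝ => Real.exp (-(r * t)) * t ^ σ) (Set.Ioi 0) := by
    have := integrableOn_rpow_mul_exp_neg_mul_rpow (p := 1) (s := σ) (by linarith) one_pos hr
    refine this.congr_fun (fun t _ => ?_) measurableSet_Ioi
    simp [mul_comm]
  have hnorm (σ : ℝ) (z : ℂ) (t : ℝ) (ht : 0 < t) :
      ‖Complex.exp (-(z * t)) * ((t ^ σ : ℝ) : ℂ)‖ = Real.exp (-(z.re * t)) * t ^ σ := by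
    rw [norm_mul, Complex.norm_exp, Complex.norm_real, Real.norm_of_nonneg (by positivity)]
    simp
  have hint (σ : ℝ) (hσ : 0 < σ) (z : ℂ) (hz : 0 < z.re) : IntegrableOn
      (fun t : ℝ => Complex.exp (-(z * t)) * ((t ^ σ : ℝ) : ℂ)) (Set.Ioi 0) := by
    refine (hreal σ z.re hσ hz).mono' (hmeas σ z) ?_
    filter_upwards [ae_restrict_mem measurableSet_Ioi] with t ht
    exact (hnorm σ z t ht).le
  refine ⟨hint ρ hρ z hz, ?_⟩
  have hopen : IsOpen {z : ℂ | 0 < z.re} := isOpen_lt continuous_const Complex.continuous_re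
  have h1 : DifferentiableOn ℂ (fun z : ℂ =>
      ∫ t in Set.Ioi (0 : ℝ), Complex.exp (-(z * t)) * ((t ^ ρ : ℝ) : ℂ)) {z | 0 < z.re} := by
    intro w hw
    have hw' : 0 < w.re := hw
    refine DifferentiableAt.differentiableWithinAt ?_
    refine (_root_.hasDerivAt_integral_of_dominated_loc_of_deriv_le (𝕜 := ℂ)
      (μ := volume.restrict (Set.Ioi (0 : ℝ))) (x₀ := w)
      (F := fun (z : ℂ) (t : ℝ) => Complex.exp (-(z * t)) * ((t ^ ρ : ℝ) : ℂ))
      (s := {z : ℂ | w.re / 2 < z.re})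
      (F' := fun z t => -(Complex.exp (-(z * t)) * ((t ^ (ρ + 1) : ℝ) : ℂ)))
      (bound := fun t => Real.exp (-(w.re / 2 * t)) * t ^ (ρ + 1))
      ?_ ?_ (hint ρ hρ w hw) ?_ ?_ (hreal _ _ (by linarith) (by linarith)) ?_).2.differentiableAt
    · exact (isOpen_lt continuous_const Complex.continuous_re).mem_nhds (by simp; linarith)
    · exact Filter.Eventually.of_forall fun z => hmeas ρ z
    · exact (hmeas _ _).neg
    · filter_upwards [ae_restrict_mem measurableSet_Ioi] with t ht z hz
      have ht' : 0 < t := ht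
      have hz' : w.re / 2 < z.re := hz
      rw [norm_neg, hnorm _ _ _ ht]
      gcongr
    · filter_upwards [ae_restrict_mem measurableSet_Ioi] with t ht z hz
      have ht' : 0 < t := ht
      have h : HasDerivAt (fun z : ℂ => -(z * t)) (-(1 * (t : ℂ))) z :=
        ((hasDerivAt_id z).mul_const _).neg
      refine ((h.cexp).mul_const ((t ^ ρ : ℝ) : ℂ)).congr_deriv ?_
      rw [Real.rpow_add ht', Real.rpow_one]
      push_cast
      ring
  have h2 : DifferentiableOn ℂ (fun z : ℂ =>
      z ^ (-((ρ : ℂ) + 1)) * (Real.Gamma (ρ + 1) : ℂ)) {z | 0 < z.re} := by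
    intro w hw
    refine DifferentiableAt.differentiableWithinAt ?_
    exact (DifferentiableAt.cpow_const differentiableAt_id (Or.inl hw)).mul_const _
  have hconv : Convex ℝ {z : ℂ | 0 < z.re} := convex_halfSpace_re_gt 0
  refine (h1.analyticOnNhd hopen).eqOn_of_preconnected_of_frequently_eq
    (h2.analyticOnNhd hopen) hconv.isPreconnected (z₀ := ((1 : ℝ) : ℂ)) (by simp) ?_ hz
  have ht : Filter.Tendsto (fun x : ℝ => (x : ℂ)) (nhdsWithin 1 (Set.Ioi 1))
      (nhdsWithin ((1 : ℝ) : ℂ) {((1 : ℝ) : ℂ)}ᶜ) := by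
    refine tendsto_nhdsWithin_of_tendsto_nhds_of_eventually_within _
      (Complex.continuous_ofReal.continuousAt.tendsto.mono_left nhdsWithin_le_nhds) ?_
    filter_upwards [self_mem_nhdsWithin] with x hx
    have : (1 : ℝ) < x := hx
    simp only [Set.mem_compl_iff, Set.mem_singleton_iff, Complex.ofReal_inj]
    exact this.ne'
  refine ht.frequently (Filter.Eventually.frequently ?_)
  filter_upwards [self_mem_nhdsWithin] with r hr
  have hr' : (0 : ℝ) < r := one_pos.trans hr
  have h := Real.integral_rpow_mul_exp_neg_mul_Ioi (a := ρ + 1) (by linarith) hr'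
  have e : (r : ℂ) ^ (-((ρ : ℂ) + 1)) = (((1 / r) ^ (ρ + 1) : ℝ) : ℂ) := by
    rw [one_div, Real.inv_rpow hr'.le, ← Real.rpow_neg hr'.le, Complex.ofReal_cpow hr'.le]
    push_cast
    rfl
  rw [e, ← Complex.ofReal_mul, ← h, ← integral_complex_ofReal]
  refine setIntegral_congr_fun measurableSet_Ioi fun t _ => ?_
  simp only [add_sub_cancel_right]
  push_cast
  ring

/-- The polar form of the Laplace transform of `t ^ ρ` at `-2iλ`, which has argument
`-arctan (Re λ / Im λ)` when `Im λ > 0`. -/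
lemma two_mul_cpow_eq {ρ : ℝ} {lam : ℂ} (hy : 0 < lam.im) :
    2 * ((-(2 * Complex.I * lam)) ^ (-((ρ : ℂ) + 1)) * (Real.Gamma (ρ + 1) : ℂ)) =
      ((Real.Gamma (ρ + 1) / (2 ^ ρ * (lam.re ^ 2 + lam.im ^ 2) ^ ((ρ + 1) / 2)) : ℝ) : ℂ) *
        Complex.exp (Complex.I * ((ρ : ℂ) + 1) * (Real.arctan (lam.re / lam.im) : ℂ)) := by
  set w : ℂ := -(2 * Complex.I * lam) with hw
  have hre : w.re = 2 * lam.im := by simp [hw]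
  have him : w.im = -(2 * lam.re) := by simp [hw]
  have hw0 : w ≠ 0 := by
    intro h
    rw [h] at hre
    simp at hre
    linarith
  have harg : Real.arctan (lam.re / lam.im) = -w.arg := by
    have h := Complex.abs_arg_lt_pi_div_two_iff.2 (Or.inl (by rw [hre]; linarith) : 0 < w.re ∨ w = 0)
    rw [abs_lt] at h
    rw [← Real.arctan_tan h.1 h.2, Complex.tan_arg, ← Real.arctan_neg, hre, him]
    congr 1
    field_simp
  have hnorm : ‖w‖ = 2 * (lam.re ^ 2 + lam.im ^ 2) ^ ((1 : ℝ) / 2) := by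
    rw [hw, norm_neg, norm_mul, norm_mul, Complex.norm_I, ← Real.sqrt_eq_rpow,
      Complex.norm_eq_sqrt_sq_add_sq lam]
    simp
  have hq : 0 < lam.re ^ 2 + lam.im ^ 2 := by positivity
  have hpow : ‖w‖ ^ (-(ρ + 1)) = 1 / (2 * (2 ^ ρ * (lam.re ^ 2 + lam.im ^ 2) ^ ((ρ + 1) / 2))) := by
    rw [hnorm, Real.mul_rpow (by norm_num) (by positivity), ← Real.rpow_mul hq.le,
      Real.rpow_neg (by norm_num), Real.rpow_add (by norm_num), Real.rpow_one,
      show (1 : ℝ) / 2 * -(ρ + 1) = -((ρ + 1) / 2) by ring, Real.rpow_neg hq.le]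
    field_simp
  have hc : w ^ (-((ρ : ℂ) + 1)) = ((‖w‖ ^ (-(ρ + 1)) : ℝ) : ℂ) *
      Complex.exp (Complex.I * ((ρ : ℂ) + 1) * (Real.arctan (lam.re / lam.im) : ℂ)) := by
    rw [Complex.cpow_def_of_ne_zero hw0, Real.rpow_def_of_pos (norm_pos_iff.2 hw0),
      Complex.ofReal_exp, ← Complex.exp_add, harg, Complex.log]
    congr 1
    push_cast
    ring
  rw [hc, hpow]
  push_cast
  field_simp

/-! ### Integration by parts and the Abelian estimate -/

/-- Integration by parts against the tail `x ↦ ∫ s in x..a, P s`, whose derivative `-P` exists only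
almost everywhere. The identity is Fubini's theorem on the triangle `0 < x < s ≤ a`, using
`∫ x in 0..s, e^{-cx} = (1 - e^{-cs}) / c`. -/
lemma integral_exp_mul_eq_of_tail {a : ℝ} (ha : 0 ≤ a) {P : ℝ → ℂ}
    (hP : IntervalIntegrable P volume 0 a) {c : ℂ} (hc : c ≠ 0) :
    ∫ s in (0 : ℝ)..a, Complex.exp (-(c * s)) * P s =
      (∫ s in (0 : ℝ)..a, P s) -
        c * ∫ x in (0 : ℝ)..a, Complex.exp (-(c * x)) * ∫ s in x..a, P s := by
  have hPi : Integrable P (volume.restrict (Set.Ioc 0 a)) :=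
    (intervalIntegrable_iff_integrableOn_Ioc_of_le ha).1 hP
  have hexp : Continuous fun x : ℝ => Complex.exp (-(c * x)) := by fun_prop
  have hEi : Integrable (fun x : ℝ => Complex.exp (-(c * x))) (volume.restrict (Set.Ioc 0 a)) :=
    (intervalIntegrable_iff_integrableOn_Ioc_of_le ha).1 (hexp.intervalIntegrable 0 a)
  have hset : MeasurableSet {p : ℝ × ℝ | p.1 < p.2} :=
    measurableSet_lt measurable_fst measurable_snd
  have hswap := integral_integral_swap
    (f := fun x s => {p : ℝ × ℝ | p.1 < p.2}.indicator
      (fun p => Complex.exp (-(c * p.1)) * P p.2) (x, s)) ((hEi.mul_prod hPi).indicator hset)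
  have hL : (∫ x in (0 : ℝ)..a, Complex.exp (-(c * x)) * ∫ s in x..a, P s) =
      ∫ x in Set.Ioc 0 a, ∫ s in Set.Ioc 0 a, {p : ℝ × ℝ | p.1 < p.2}.indicator
        (fun p => Complex.exp (-(c * p.1)) * P p.2) (x, s) := by
    rw [intervalIntegral.integral_of_le ha]
    refine setIntegral_congr_fun measurableSet_Ioc fun x hx => ?_
    have : (fun s : ℝ => {p : ℝ × ℝ | p.1 < p.2}.indicator
        (fun p => Complex.exp (-(c * p.1)) * P p.2) (x, s)) =
        (Set.Ioi x).indicator fun s => Complex.exp (-(c * x)) * P s := by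
      ext s
      simp [Set.indicator_apply]
    simp only [this]
    rw [setIntegral_indicator measurableSet_Ioi, MeasureTheory.integral_const_mul,
      intervalIntegral.integral_of_le hx.2]
    congr 3
    ext s
    have := hx.1
    simp only [Set.mem_Ioc, Set.mem_inter_iff, Set.mem_Ioi]
    constructor
    · rintro ⟨h1, h2⟩
      exact ⟨⟨by linarith, h2⟩, h1⟩
    · rintro ⟨⟨h1, h2⟩, h3⟩
      exact ⟨h3, h2⟩
  have hR : (∫ s in (0 : ℝ)..a, (1 - Complex.exp (-(c * s))) / c * P s) =
      ∫ s in Set.Ioc 0 a, ∫ x in Set.Ioc 0 a, {p : ℝ × ℝ | p.1 < p.2}.indicator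
        (fun p => Complex.exp (-(c * p.1)) * P p.2) (x, s) := by
    rw [intervalIntegral.integral_of_le ha]
    refine setIntegral_congr_fun measurableSet_Ioc fun s hs => ?_
    have : (fun x : ℝ => {p : ℝ × ℝ | p.1 < p.2}.indicator
        (fun p => Complex.exp (-(c * p.1)) * P p.2) (x, s)) =
        (Set.Iio s).indicator fun x => Complex.exp (-(c * x)) * P s := by
      ext s
      simp [Set.indicator_apply]
    simp only [this]
    have hI : Set.Ioc 0 a ∩ Set.Iio s = Set.Ioo 0 s := by
      ext x
      have := hs.2
      simp only [Set.mem_Ioc, Set.mem_inter_iff, Set.mem_Iio, Set.mem_Ioo]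
      constructor
      · rintro ⟨⟨h1, h2⟩, h3⟩
        exact ⟨h1, h3⟩
      · rintro ⟨h1, h2⟩
        exact ⟨⟨h1, by linarith⟩, h2⟩
    rw [setIntegral_indicator measurableSet_Iio, MeasureTheory.integral_mul_const, hI,
      ← integral_Ioc_eq_integral_Ioo, ← intervalIntegral.integral_of_le hs.1.le]
    have h := integral_exp_mul_complex (a := 0) (b := s) (neg_ne_zero.2 hc)
    simp only [neg_mul] at h
    rw [h]
    congr 1
    simp only [Complex.ofReal_zero, mul_zero, neg_zero, Complex.exp_zero]
    field_simp
    ring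
  have hEP : IntervalIntegrable (fun s : ℝ => Complex.exp (-(c * s)) * P s) volume 0 a :=
    hP.continuousOn_mul hexp.continuousOn
  rw [hL, hswap, ← hR, ← intervalIntegral.integral_const_mul,
    ← intervalIntegral.integral_sub hP]
  · refine intervalIntegral.integral_congr fun s _ => ?_
    field_simp
    ring
  · refine ((hP.sub hEP)).congr fun s _ => ?_
    field_simp

/-- Quantitative Abelian estimate: where `t < h` the integrand carries the small constant `η`, and where
`t ≥ h` half of the exponential decay `e^{-2yt}` is spent on the factor `e^{-yh}`. -/
lemma norm_laplace_le {ρ η K h y : ℝ} (hρ : 0 < ρ) (hη : 0 ≤ η) (hK : 0 ≤ K) (hy : 0 < y)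
    {G : ℝ → ℂ} (hG : ∀ t, 0 < t → t < h → ‖G t‖ ≤ η * t ^ ρ)
    (hG' : ∀ t, 0 < t → ‖G t‖ ≤ K * t ^ ρ) {z : ℂ} (hz : z.re = 2 * y) :
    ‖∫ t in Set.Ioi (0 : ℝ), Complex.exp (-(z * t)) * G t‖ ≤
      (η + K * Real.exp (-(y * h))) * (Real.Gamma (ρ + 1) / y ^ (ρ + 1)) := by
  have hval := Real.integral_rpow_mul_exp_neg_mul_Ioi (a := ρ + 1) (by linarith) hy
  simp only [add_sub_cancel_right] at hval
  have hint : IntegrableOn (fun t : ℝ => t ^ ρ * Real.exp (-(y * t))) (Set.Ioi 0) := by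
    have := integrableOn_rpow_mul_exp_neg_mul_rpow (p := 1) (s := ρ) (by linarith) one_pos hy
    refine this.congr_fun (fun t _ => ?_) measurableSet_Ioi
    simp
  have hle : ‖∫ t in Set.Ioi (0 : ℝ), Complex.exp (-(z * t)) * G t‖ ≤
      ∫ t in Set.Ioi (0 : ℝ),
        (η + K * Real.exp (-(y * h))) * (t ^ ρ * Real.exp (-(y * t))) := by
    refine norm_integral_le_of_norm_le (hint.const_mul _) ?_
    filter_upwards [ae_restrict_mem measurableSet_Ioi] with t ht
    have ht' : 0 < t := ht
    have hn : ‖Complex.exp (-(z * t))‖ = Real.exp (-(y * t)) * Real.exp (-(y * t)) := by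
      rw [Complex.norm_exp, ← Real.exp_add]
      congr 1
      simp [hz]
      ring
    rw [norm_mul, hn]
    have hp : 0 ≤ t ^ ρ * Real.exp (-(y * t)) := by positivity
    rcases lt_or_ge t h with hth | hth
    · have h1 : Real.exp (-(y * t)) ≤ 1 := Real.exp_le_one_iff.2 (by nlinarith)
      calc Real.exp (-(y * t)) * Real.exp (-(y * t)) * ‖G t‖
          ≤ 1 * Real.exp (-(y * t)) * (η * t ^ ρ) := by
            gcongr
            exact hG t ht' hth
        _ = η * (t ^ ρ * Real.exp (-(y * t))) := by ring
        _ ≤ _ := by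
            gcongr
            have : 0 ≤ K * Real.exp (-(y * h)) := by positivity
            linarith
    · calc Real.exp (-(y * t)) * Real.exp (-(y * t)) * ‖G t‖
          ≤ Real.exp (-(y * h)) * Real.exp (-(y * t)) * (K * t ^ ρ) := by
            gcongr
            exact hG' t ht'
        _ = K * Real.exp (-(y * h)) * (t ^ ρ * Real.exp (-(y * t))) := by ring
        _ ≤ _ := by
            gcongr
            linarith
  refine hle.trans_eq ?_
  rw [MeasureTheory.integral_const_mul, hval, one_div, Real.inv_rpow hy.le]
  congr 1
  field_simp

/-- In the sector `ε ≤ arg λ ≤ π - ε` the imaginary part is positive and comparable to `|λ|`. -/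
lemma norm_le_im_div_sin {ε : ℝ} (hε : 0 < ε) {lam : ℂ} (h1 : ε ≤ lam.arg)
    (h2 : lam.arg ≤ π - ε) : 0 < lam.im ∧ ‖lam‖ * Real.sin ε ≤ lam.im := by
  have hs : Real.sin ε ≤ Real.sin lam.arg := by
    rcases le_total lam.arg (π / 2) with h | h
    · exact Real.sin_le_sin_of_le_of_le_pi_div_two (by linarith [Real.pi_pos]) h h1
    · rw [← Real.sin_pi_sub lam.arg]
      exact Real.sin_le_sin_of_le_of_le_pi_div_two (by linarith [Real.pi_pos]) (by linarith)
        (by linarith)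
  have him := Complex.norm_mul_sin_arg lam
  have hle : ‖lam‖ * Real.sin ε ≤ lam.im := by
    rw [← him]
    gcongr
  have hpos : 0 < ‖lam‖ := by
    rw [norm_pos_iff]
    rintro rfl
    simp at h1
    linarith
  have hsin : 0 < Real.sin ε := Real.sin_pos_of_pos_of_lt_pi hε (by linarith)
  exact ⟨lt_of_lt_of_le (by positivity) hle, hle⟩

/-! ### The tail of `P` near `π` and the error term -/

lemma continuousOn_tail {P : ℝ → ℂ} (hP : IntervalIntegrable P volume 0 π) :
    ContinuousOn (fun t => ∫ x in π - t..π, P x) (Set.Icc 0 π) := by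
  have hPi : IntegrableOn P (Set.uIcc 0 π) volume := by
    rwa [Set.uIcc_of_le Real.pi_pos.le,
      ← intervalIntegrable_iff_integrableOn_Icc_of_le Real.pi_pos.le]
  have h := intervalIntegral.continuousOn_primitive_interval_left hPi
  rw [Set.uIcc_of_le Real.pi_pos.le] at h
  have hmaps : Set.MapsTo (fun t : ℝ => π - t) (Set.Icc 0 π) (Set.Icc 0 π) :=
    fun t ht => ⟨by linarith [ht.2], by linarith [ht.1]⟩
  exact h.comp (Continuous.continuousOn (by fun_prop)) hmaps

/-- The tail `t ↦ ∫ x in π - t..π, P x`, truncated to zero beyond `t = π`, differs from `ν t ^ ρ` by at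
most `η t ^ ρ` near zero, and by at most a constant multiple of `t ^ ρ` for every `t > 0`. -/
lemma tail_estimates {P : ℝ → ℂ} (hP : IntervalIntegrable P volume 0 π) {ρ : ℝ} (hρ : 0 < ρ)
    {ν : ℂ} (hlim : Filter.Tendsto
      (fun h : ℝ => (∫ x in π - h..π, P x) / ((h ^ ρ : ℝ) : ℂ))
      (nhdsWithin 0 (Set.Ioi 0)) (nhds ν)) {η : ℝ} (hη : 0 < η) :
    ∃ h > 0, ∃ K ≥ 0, ∀ t, 0 < t →
      (t < h → ‖(Set.Ioc 0 π).indicator (fun t => ∫ x in π - t..π, P x) t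
        - ν * ((t ^ ρ : ℝ) : ℂ)‖ ≤ η * t ^ ρ) ∧
      ‖(Set.Ioc 0 π).indicator (fun t => ∫ x in π - t..π, P x) t
        - ν * ((t ^ ρ : ℝ) : ℂ)‖ ≤ K * t ^ ρ := by
  set F : ℝ → ℂ := fun t => ∫ x in π - t..π, P x with hF
  have hcont : ContinuousOn F (Set.Icc 0 π) := continuousOn_tail hP
  obtain ⟨M, hM⟩ := isCompact_Icc.exists_bound_of_continuousOn hcont
  have hM0 : 0 ≤ M := (norm_nonneg _).trans (hM 0 ⟨le_rfl, Real.pi_pos.le⟩)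
  have hev : ∀ᶠ t in nhdsWithin (0 : ℝ) (Set.Ioi 0), dist (F t / ((t ^ ρ : ℝ) : ℂ)) ν < η :=
    hlim (Metric.ball_mem_nhds ν hη)
  obtain ⟨h₀, hh₀, hsub⟩ := mem_nhdsGT_iff_exists_Ioo_subset.1 hev
  have hh₀' : 0 < h₀ := hh₀
  have hsmall : ∀ t, 0 < t → t < min h₀ π →
      ‖(Set.Ioc 0 π).indicator F t - ν * ((t ^ ρ : ℝ) : ℂ)‖ ≤ η * t ^ ρ := by
    intro t ht hth
    have hpos : 0 < t ^ ρ := Real.rpow_pos_of_pos ht ρ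
    have h1 : dist (F t / ((t ^ ρ : ℝ) : ℂ)) ν < η := hsub ⟨ht, hth.trans_le (min_le_left _ _)⟩
    rw [Set.indicator_of_mem (show t ∈ Set.Ioc 0 π from ⟨ht, (hth.trans_le (min_le_right _ _)).le⟩)]
    have hne : ((t ^ ρ : ℝ) : ℂ) ≠ 0 := Complex.ofReal_ne_zero.2 hpos.ne'
    have h2 : F t - ν * ((t ^ ρ : ℝ) : ℂ) =
        (F t / ((t ^ ρ : ℝ) : ℂ) - ν) * ((t ^ ρ : ℝ) : ℂ) := by
      field_simp
    rw [h2, norm_mul, Complex.norm_real, Real.norm_of_nonneg hpos.le, ← dist_eq_norm]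
    gcongr
  have hmin : 0 < min h₀ π := lt_min hh₀' Real.pi_pos
  -- beyond `min h₀ π` the tail is bounded by `M ≤ M / (min h₀ π) ^ ρ * t ^ ρ`
  refine ⟨min h₀ π, hmin, η + M / (min h₀ π) ^ ρ + ‖ν‖, by positivity,
    fun t ht => ⟨hsmall t ht, ?_⟩⟩
  have hpos : 0 < t ^ ρ := Real.rpow_pos_of_pos ht ρ
  rcases lt_or_ge t (min h₀ π) with hth | hth
  · refine (hsmall t ht hth).trans ?_
    gcongr
    have : 0 ≤ M / (min h₀ π) ^ ρ + ‖ν‖ := by positivity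
    linarith
  · have h1 : ‖(Set.Ioc 0 π).indicator F t‖ ≤ M := by
      by_cases hmem : t ∈ Set.Ioc 0 π
      · rw [Set.indicator_of_mem hmem]
        exact hM t ⟨hmem.1.le, hmem.2⟩
      · rw [Set.indicator_of_notMem hmem, norm_zero]
        exact hM0
    have h2 : M ≤ M / (min h₀ π) ^ ρ * t ^ ρ := by
      rw [div_mul_eq_mul_div, le_div_iff₀ (by positivity)]
      gcongr
    calc ‖(Set.Ioc 0 π).indicator F t - ν * ((t ^ ρ : ℝ) : ℂ)‖
        ≤ M + ‖ν‖ * t ^ ρ := by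
          refine (norm_sub_le _ _).trans ?_
          rw [norm_mul, Complex.norm_real, Real.norm_of_nonneg hpos.le]
          gcongr
      _ ≤ (η + M / (min h₀ π) ^ ρ + ‖ν‖) * t ^ ρ := by
          have : 0 ≤ η * t ^ ρ := by positivity
          linarith

/-- Exact formula for the error: a boundary term, and the Laplace transform at `-2iλ` of the difference
between the truncated tail and `ν t ^ ρ`. -/
lemma p0_sub_main_eq {P : ℝ → ℂ} (hP : IntervalIntegrable P volume 0 π) {ρ : ℝ} (hρ : 0 < ρ)
    (ν : ℂ) {lam : ℂ} (hy : 0 < lam.im) :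
    (-Complex.I * Complex.exp (Complex.I * (π : ℂ) * lam) *
        ∫ s in (0 : ℝ)..π, Complex.exp (-(2 * Complex.I * lam * (s : ℂ))) * P s) -
      (-ν * lam * Complex.exp (-(Complex.I * (π : ℂ) * lam)) *
        ((Real.Gamma (ρ + 1) / (2 ^ ρ * (lam.re ^ 2 + lam.im ^ 2) ^ ((ρ + 1) / 2)) : ℝ) : ℂ) *
        Complex.exp (Complex.I * ((ρ : ℂ) + 1) * (Real.arctan (lam.re / lam.im) : ℂ))) =
    -Complex.I * Complex.exp (Complex.I * (π : ℂ) * lam) * (∫ s in (0 : ℝ)..π, P s) -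
      2 * lam * Complex.exp (-(Complex.I * (π : ℂ) * lam)) *
        ∫ t in Set.Ioi (0 : ℝ), Complex.exp (-(-(2 * Complex.I * lam) * t)) *
          ((Set.Ioc 0 π).indicator (fun t => ∫ x in π - t..π, P x) t
            - ν * ((t ^ ρ : ℝ) : ℂ)) := by
  set c : ℂ := 2 * Complex.I * lam with hc
  set F : ℝ → ℂ := fun t => ∫ x in π - t..π, P x with hF
  have hre : 0 < (-c).re := by simp [hc, hy]
  have hc0 : c ≠ 0 := by
    intro h
    simp [h] at hre
  obtain ⟨hJi, hJ⟩ := laplace_rpow hρ hre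
  have hcont : ContinuousOn F (Set.Icc 0 π) := continuousOn_tail hP
  have hmul : (fun t : ℝ => Complex.exp (-(-c * t)) * (Set.Ioc 0 π).indicator F t) =
      (Set.Ioc 0 π).indicator fun t : ℝ => Complex.exp (-(-c * t)) * F t := by
    ext t
    by_cases h : t ∈ Set.Ioc 0 π <;> simp [h]
  have hKon : IntegrableOn (fun t : ℝ => Complex.exp (-(-c * t)) * F t) (Set.Ioc 0 π) := by
    refine (ContinuousOn.integrableOn_Icc ?_).mono_set Set.Ioc_subset_Icc_self
    exact ContinuousOn.mul (Continuous.continuousOn (by fun_prop)) hcont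
  have hKi : IntegrableOn
      (fun t : ℝ => Complex.exp (-(-c * t)) * (Set.Ioc 0 π).indicator F t) (Set.Ioi 0) := by
    rw [hmul]
    exact ((integrable_indicator_iff measurableSet_Ioc).2 hKon).integrableOn
  have hK : ∫ t in Set.Ioi (0 : ℝ), Complex.exp (-(-c * t)) * (Set.Ioc 0 π).indicator F t =
      ∫ t in (0 : ℝ)..π, Complex.exp (c * t) * F t := by
    rw [hmul, setIntegral_indicator measurableSet_Ioc, intervalIntegral.integral_of_le Real.pi_pos.le,
      Set.inter_eq_self_of_subset_right Set.Ioc_subset_Ioi_self]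
    simp
  have hsplit : ∫ t in Set.Ioi (0 : ℝ), Complex.exp (-(-c * t)) *
        ((Set.Ioc 0 π).indicator F t - ν * ((t ^ ρ : ℝ) : ℂ)) =
      (∫ t in (0 : ℝ)..π, Complex.exp (c * t) * F t) -
        ν * ((-c) ^ (-((ρ : ℂ) + 1)) * (Real.Gamma (ρ + 1) : ℂ)) := by
    rw [← hJ, ← hK, ← MeasureTheory.integral_const_mul,
      ← MeasureTheory.integral_sub hKi (hJi.const_mul ν)]
    refine integral_congr_ae (Filter.Eventually.of_forall fun t => ?_)
    simp only
    ring
  -- the substitution `x = π - t` in the integral of the tail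
  have hsubst : ∫ x in (0 : ℝ)..π, Complex.exp (-(c * x)) * ∫ s in x..π, P s =
      Complex.exp (-(c * π)) * ∫ t in (0 : ℝ)..π, Complex.exp (c * t) * F t := by
    have h := intervalIntegral.integral_comp_sub_left (a := 0) (b := π)
      (fun x : ℝ => Complex.exp (-(c * x)) * ∫ s in x..π, P s) π
    rw [sub_self, sub_zero] at h
    rw [← h, ← intervalIntegral.integral_const_mul]
    refine intervalIntegral.integral_congr fun t _ => ?_
    simp only [hF]
    rw [← mul_assoc, ← Complex.exp_add]
    congr 2
    push_cast
    ring
  have hD := two_mul_cpow_eq (ρ := ρ) hy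
  have hB : Complex.exp (Complex.I * (π : ℂ) * lam) * Complex.exp (-(c * π)) =
      Complex.exp (-(Complex.I * (π : ℂ) * lam)) := by
    rw [← Complex.exp_add, hc]
    congr 1
    ring
  rw [integral_exp_mul_eq_of_tail Real.pi_pos.le hP hc0, hsubst, hsplit,
    mul_assoc (-ν * lam * _), ← hD, ← hB]
  have hI := Complex.I_sq
  linear_combination (2 * lam * Complex.exp (Complex.I * (π : ℂ) * lam) *
      Complex.exp (-(c * π)) * ∫ t in (0 : ℝ)..π, Complex.exp (c * t) * F t) * hI +
    (Complex.I * Complex.exp (Complex.I * (π : ℂ) * lam) *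
      Complex.exp (-(c * π)) * ∫ t in (0 : ℝ)..π, Complex.exp (c * t) * F t) * hc

/-- Formula (43) of Lemma 4: if `P ∈ L¹(0,π)`, `ρ > 0`, and
`lim_{h→0⁺} (∫_{π-h}^π P)/h^ρ = ν ≠ 0`, then uniformly in the sector
`Ω_ε⁺ = {ε ≤ arg λ ≤ π - ε}`, as `|Im λ| → ∞`,
`-i e^{iπλ} p₀(π,λ) = -νλ e^{-iπλ} Γ(ρ+1) / (2^ρ ((Re λ)²+(Im λ)²)^{(ρ+1)/2})
  · e^{i(ρ+1) arctan(Re λ/Im λ)} + e^{π|Im λ|} o(1)/|Im λ|^ρ`. -/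
theorem p0_asymptotics_upper_sector
    (P : ℝ → ℂ) (hP : IntervalIntegrable P MeasureTheory.volume 0 Real.pi)
    (ρ : ℝ) (hρ : 0 < ρ) (ν : ℂ) (hν : ν ≠ 0)
    (hlim : Filter.Tendsto
      (fun h : ℝ => (∫ x in Real.pi - h..Real.pi, P x) / ((h ^ ρ : ℝ) : ℂ))
      (nhdsWithin 0 (Set.Ioi 0)) (nhds ν))
    (ε : ℝ) (hε : 0 < ε) (hε' : ε < Real.pi / 10) :
    ∀ δ > (0 : ℝ), ∃ C : ℝ, ∀ lam : ℂ,
      ε ≤ lam.arg → lam.arg ≤ Real.pi - ε → C ≤ |lam.im| →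
        |lam.im| ^ ρ * Real.exp (-(Real.pi * |lam.im|)) *
          ‖(-Complex.I * Complex.exp (Complex.I * (Real.pi : ℂ) * lam) *
              ∫ s in (0 : ℝ)..Real.pi,
                Complex.exp (-(2 * Complex.I * lam * (s : ℂ))) * P s) -
            (-ν * lam * Complex.exp (-(Complex.I * (Real.pi : ℂ) * lam)) *
              ((Real.Gamma (ρ + 1) /
                  (2 ^ ρ * (lam.re ^ 2 + lam.im ^ 2) ^ ((ρ + 1) / 2)) : ℝ) : ℂ) *
              Complex.exp (Complex.I * ((ρ : ℂ) + 1) *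
                (Real.arctan (lam.re / lam.im) : ℂ)))‖ ≤ δ := by

  intro δ hδ
  have hΓ : 0 < Real.Gamma (ρ + 1) := Real.Gamma_pos_of_pos (by linarith)
  have hsin : 0 < Real.sin ε := Real.sin_pos_of_pos_of_lt_pi hε (by linarith [Real.pi_pos])
  set S : ℝ := 2 / Real.sin ε * Real.Gamma (ρ + 1) with hS
  -- `S * η` bounds the contribution of the tail near zero, so `η = δ / (3 * S)` makes it `δ / 3`
  have hS0 : 0 < S := by positivity
  obtain ⟨h, hh, K, hK, hG⟩ := tail_estimates hP hρ hlim (η := δ / (3 * S)) (by positivity)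
  have hev1 : ∀ᶠ y : ℝ in Filter.atTop, S * (K * Real.exp (-(y * h))) < δ / 3 := by
    have h1 := tendsto_rpow_mul_exp_neg_mul_atTop_nhds_zero 0 h hh
    have h2 := h1.const_mul (S * K)
    rw [mul_zero] at h2
    filter_upwards [h2.eventually_lt_const (show 0 < δ / 3 by positivity)] with y hy
    rw [Real.rpow_zero, one_mul] at hy
    rwa [mul_comm y h, ← mul_assoc, ← neg_mul]
  have hev2 : ∀ᶠ y : ℝ in Filter.atTop,
      y ^ ρ * Real.exp (-(2 * π) * y) * ‖∫ s in (0 : ℝ)..π, P s‖ < δ / 3 := by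
    have h2 := (tendsto_rpow_mul_exp_neg_mul_atTop_nhds_zero ρ (2 * π)
      (by positivity)).mul_const ‖∫ s in (0 : ℝ)..π, P s‖
    rw [zero_mul] at h2
    exact h2.eventually_lt_const (by positivity)
  obtain ⟨C, hC⟩ := Filter.eventually_atTop.1 (hev1.and hev2)
  refine ⟨C, fun lam harg1 harg2 hCy => ?_⟩
  obtain ⟨hy, hlam⟩ := norm_le_im_div_sin hε harg1 harg2
  rw [abs_of_pos hy] at hCy ⊢
  obtain ⟨hC1, hC2⟩ := hC _ hCy
  rw [p0_sub_main_eq hP hρ ν hy]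
  have hI := norm_laplace_le (z := -(2 * Complex.I * lam)) hρ
    (show 0 ≤ δ / (3 * S) by positivity) hK hy
    (fun t ht => (hG t ht).1) (fun t ht => (hG t ht).2) (by simp)
  set y := lam.im with hydef
  set J := ∫ t in Set.Ioi (0 : ℝ), Complex.exp (-(-(2 * Complex.I * lam) * t)) *
          ((Set.Ioc 0 π).indicator (fun t => ∫ x in π - t..π, P x) t
            - ν * ((t ^ ρ : ℝ) : ℂ)) with hJ
  set A := ∫ s in (0 : ℝ)..π, P s with hA
  have hn1 : ‖Complex.exp (Complex.I * (π : ℂ) * lam)‖ = Real.exp (-(π * y)) := by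
    rw [Complex.norm_exp]
    simp [hydef]
  have hn2 : ‖Complex.exp (-(Complex.I * (π : ℂ) * lam))‖ = Real.exp (π * y) := by
    rw [Complex.norm_exp]
    simp [hydef]
  have hyρ : 0 < y ^ ρ := Real.rpow_pos_of_pos hy ρ
  have hlam' : ‖lam‖ ≤ y / Real.sin ε := by rwa [le_div_iff₀ hsin]
  have hee : Real.exp (-(π * y)) * Real.exp (π * y) = 1 := by
    rw [← Real.exp_add]
    simp
  have hee2 : Real.exp (-(π * y)) * Real.exp (-(π * y)) = Real.exp (-(2 * π) * y) := by
    rw [← Real.exp_add]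
    congr 1
    ring
  have hnorm : ‖-Complex.I * Complex.exp (Complex.I * (π : ℂ) * lam) * A -
      2 * lam * Complex.exp (-(Complex.I * (π : ℂ) * lam)) * J‖ ≤
      Real.exp (-(π * y)) * ‖A‖ + 2 * ‖lam‖ * Real.exp (π * y) * ‖J‖ := by
    refine (norm_sub_le _ _).trans_eq ?_
    simp only [norm_mul, norm_neg, Complex.norm_I, hn1, hn2, one_mul, Complex.norm_ofNat]
  calc y ^ ρ * Real.exp (-(π * y)) * _
      ≤ y ^ ρ * Real.exp (-(π * y)) *
        (Real.exp (-(π * y)) * ‖A‖ + 2 * ‖lam‖ * Real.exp (π * y) * ‖J‖) := by gcongr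
    _ = y ^ ρ * Real.exp (-(2 * π) * y) * ‖A‖ + y ^ ρ * 2 * ‖lam‖ * ‖J‖ := by
        rw [← hee2]
        linear_combination (y ^ ρ * 2 * ‖lam‖ * ‖J‖) * hee
    _ ≤ y ^ ρ * Real.exp (-(2 * π) * y) * ‖A‖ + y ^ ρ * 2 * (y / Real.sin ε) *
        ((δ / (3 * S) + K * Real.exp (-(y * h))) * (Real.Gamma (ρ + 1) / y ^ (ρ + 1))) := by
        gcongr
    _ = y ^ ρ * Real.exp (-(2 * π) * y) * ‖A‖ + (δ / 3 + S * (K * Real.exp (-(y * h)))) := by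
        rw [Real.rpow_add hy, Real.rpow_one, hS]
        field_simp
    _ ≤ δ := by linarith
end

section
/- Let P, Q ∈ L¹(0,π) be complex-valued, let ρ > 0, and suppose lim_{h→0⁺} ( ∫_{π−h}^{π} P(x) dx ) / h^ρ = ν with ν ≠ 0. Fix 0 < ε < π/10. Then |Im λ|^ρ e^{−2π|Im λ|} · ∑_{n=1}^∞ |pₙ(π,λ)| → 0 as |Im λ| → ∞, uniformly for λ in the sector Ω_ε⁺; that is, ∑_{n=1}^∞ |pₙ(π,λ)| = e^{2π|Im λ|} o(1) / |Im λ|^ρ uniformly on Ω_ε⁺. -/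
/-!
Write `y = Im λ > 0`, so that `|e^{-2iλs}| = e^{2ys}`. Two ingredients give the estimate.

*A gain of `y^{-ρ}` from the outermost integral.* Exchanging the two outer integrals,
`p_{n+1}(π) = ∫₀^π e^{2iλt} Q(t) pₙ(t) R(t) dt` with `R(t) = ∫_t^π e^{-2iλs} P(s) ds`. The hypothesis
on `P` at `π` gives `|∫_t^π P| ≤ C (π - t)^ρ` on all of `[0,π]`; integrating by parts in `R` and using
`|λ| ≤ y / sin ε` in the sector yields `|R(t)| ≤ K y^{-ρ} e^{2πy}` (`norm_tail_le`).

*Geometric decay in `n`.* With `E_y(t) = ∫₀^t e^{-2y(t-s)} |P(s)| ds` (`decayConv`) and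
`κ(y) = ∫₀^π |Q| E_y` (`contraction`), induction gives `|pₙ(t)| ≤ κ(y)ⁿ e^{2yt} E_y(t)`
(`norm_pIter_le`). By dominated convergence `κ(y) → 0` as `y → ∞` (`contraction_tendsto`).

Together `|p_{n+1}(π)| ≤ K y^{-ρ} e^{2πy} κ(y)^{n+1}`, and for `κ(y) ≤ 1/2` the sum over `n` is at most
`2 K κ(y) y^{-ρ} e^{2πy}`. All bounds depend on `λ` only through `y`, hence are uniform.
-/

open MeasureTheory Real intervalIntegral

/-! ### Preliminaries on exponentials and interval integrals -/

lemma norm_exp_neg (lam : ℂ) (s : ℝ) :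
    ‖Complex.exp (-(2 * Complex.I * lam * (s : ℂ)))‖ = Real.exp (2 * lam.im * s) := by
  rw [Complex.norm_exp]
  simp

lemma norm_exp_pos (lam : ℂ) (s : ℝ) :
    ‖Complex.exp (2 * Complex.I * lam * (s : ℂ))‖ = Real.exp (-(2 * lam.im * s)) := by
  rw [Complex.norm_exp]
  simp

/-- Fubini on the triangle `a < y ≤ x ≤ b`; it stands in for integration by parts with absolutely
continuous primitives. -/
lemma integral_triangle_swap {f h : ℝ → ℂ} {a b : ℝ} (hab : a ≤ b)
    (hf : IntervalIntegrable f volume a b) (hh : IntervalIntegrable h volume a b) :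
    ∫ x in a..b, f x * ∫ y in a..x, h y = ∫ y in a..b, h y * ∫ x in y..b, f x := by
  have hf' : Integrable f (volume.restrict (Set.Ioc a b)) :=
    (intervalIntegrable_iff_integrableOn_Ioc_of_le hab).1 hf
  have hh' : Integrable h (volume.restrict (Set.Ioc a b)) :=
    (intervalIntegrable_iff_integrableOn_Ioc_of_le hab).1 hh
  have hm : MeasurableSet {z : ℝ × ℝ | z.2 ≤ z.1} := measurableSet_le measurable_snd measurable_fst
  have hint := (hf'.mul_prod hh').indicator hm
  have key := integral_integral_swap
    (f := fun x y => Set.indicator {z : ℝ × ℝ | z.2 ≤ z.1} (fun z => f z.1 * h z.2) (x, y)) hint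
  rw [intervalIntegral.integral_of_le hab, intervalIntegral.integral_of_le hab]
  convert key using 1
  · refine setIntegral_congr_fun measurableSet_Ioc fun x hx => ?_
    have e : (fun y => Set.indicator {z : ℝ × ℝ | z.2 ≤ z.1} (fun z => f z.1 * h z.2) (x, y))
        = Set.indicator (Set.Iic x) (fun y => f x * h y) := by
      ext y; simp [Set.indicator_apply]
    simp only [e]
    rw [MeasureTheory.integral_indicator measurableSet_Iic, Measure.restrict_restrict measurableSet_Iic,
      MeasureTheory.integral_const_mul, intervalIntegral.integral_of_le hx.1.le]
    congr 3
    ext y; simp only [Set.mem_Ioc, Set.mem_inter_iff, Set.mem_Iic]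
    constructor
    · rintro ⟨h1, h2⟩; exact ⟨h2, h1, h2.trans hx.2⟩
    · rintro ⟨h1, h2, _⟩; exact ⟨h2, h1⟩
  · refine setIntegral_congr_fun measurableSet_Ioc fun y hy => ?_
    have e : (fun x => Set.indicator {z : ℝ × ℝ | z.2 ≤ z.1} (fun z => f z.1 * h z.2) (x, y))
        = Set.indicator (Set.Ici y) (fun x => h y * f x) := by
      ext x; simp [Set.indicator_apply, mul_comm]
    simp only [e]
    rw [MeasureTheory.integral_indicator measurableSet_Ici, Measure.restrict_restrict measurableSet_Ici,
      MeasureTheory.integral_const_mul, intervalIntegral.integral_of_le hy.2, ← integral_Icc_eq_integral_Ioc]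
    congr 3
    ext x; simp only [Set.mem_Icc, Set.mem_Ioc, Set.mem_inter_iff, Set.mem_Ici]
    constructor
    · rintro ⟨h1, h2⟩; exact ⟨h1, hy.1.trans_le h1, h2⟩
    · rintro ⟨h1, _, h2⟩; exact ⟨h1, h2⟩

lemma IntervalIntegrable.sub_pi {E : Type*} [NormedAddCommGroup E] {f : ℝ → E} {b a c : ℝ}
    (hf : IntervalIntegrable f volume 0 b) (ha : 0 ≤ a) (hac : a ≤ c) (hc : c ≤ b) :
    IntervalIntegrable f volume a c := by
  refine hf.mono_set ?_
  rw [Set.uIcc_of_le hac, Set.uIcc_of_le (ha.trans (hac.trans hc))]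
  exact Set.Icc_subset_Icc ha hc

lemma continuousOn_primitive_pi {E : Type*} [NormedAddCommGroup E] [NormedSpace ℝ E]
    {f : ℝ → E} (hf : IntervalIntegrable f volume 0 Real.pi) :
    ContinuousOn (fun t => ∫ s in (0 : ℝ)..t, f s) (Set.uIcc 0 Real.pi) :=
  intervalIntegral.continuousOn_primitive_interval' hf Set.left_mem_uIcc

/-! ### The contraction factor -/

/-- `E_y(t) = ∫₀^t e^{-2y(t-s)} |P(s)| ds`, the majorant of `e^{-2yt} |p₀(t,λ)|` for `Im λ = y`. -/
noncomputable def decayConv (P : ℝ → ℂ) (y t : ℝ) : ℝ :=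
  ∫ s in (0 : ℝ)..t, Real.exp (-(2 * y * (t - s))) * ‖P s‖

/-- `κ(y) = ∫₀^π |Q(t)| E_y(t) dt`, the factor gained when passing from `pₙ` to `pₙ₊₁`
for `Im λ = y`. -/
noncomputable def contraction (P Q : ℝ → ℂ) (y : ℝ) : ℝ :=
  ∫ t in (0 : ℝ)..Real.pi, ‖Q t‖ * decayConv P y t

lemma decayConv_eq (P : ℝ → ℂ) (y t : ℝ) :
    decayConv P y t = Real.exp (-(2 * y * t)) *
      ∫ s in (0 : ℝ)..t, Real.exp (2 * y * s) * ‖P s‖ := by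
  rw [decayConv, ← intervalIntegral.integral_const_mul]
  congr 1; ext s
  rw [← mul_assoc, ← Real.exp_add]; congr 2; ring

lemma decayConv_nonneg (P : ℝ → ℂ) (y : ℝ) {t : ℝ} (ht : 0 ≤ t) : 0 ≤ decayConv P y t :=
  intervalIntegral.integral_nonneg ht fun s _ => by positivity

lemma decayConv_continuousOn {P : ℝ → ℂ}
    (hP : IntervalIntegrable P volume 0 Real.pi)
    (y : ℝ) : ContinuousOn (decayConv P y) (Set.uIcc 0 Real.pi) := by
  have h : IntervalIntegrable (fun s => Real.exp (2 * y * s) * ‖P s‖) volume 0 Real.pi :=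
    hP.norm.continuousOn_mul (by fun_prop)
  have h2 := continuousOn_primitive_pi h
  have : decayConv P y = _ := funext (decayConv_eq P y)
  rw [this]
  exact ContinuousOn.mul (by fun_prop) h2

lemma decayConv_le {P : ℝ → ℂ}
    (hP : IntervalIntegrable P volume 0 Real.pi)
    {y : ℝ} (hy : 0 ≤ y) {t : ℝ} (ht : t ∈ Set.Icc 0 Real.pi) :
    decayConv P y t ≤ ∫ s in (0 : ℝ)..Real.pi, ‖P s‖ := by
  have h1 := (hP.norm.sub_pi le_rfl ht.1 ht.2)
  calc decayConv P y t ≤ ∫ s in (0 : ℝ)..t, ‖P s‖ := by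
        refine intervalIntegral.integral_mono_on ht.1 (h1.continuousOn_mul (by fun_prop)) h1 ?_
        intro s hs
        refine mul_le_of_le_one_left (norm_nonneg _) (Real.exp_le_one_iff.2 ?_)
        have := mul_nonneg hy (sub_nonneg.2 hs.2)
        linarith
    _ ≤ _ := intervalIntegral.integral_mono_interval le_rfl ht.1 ht.2
        (Filter.Eventually.of_forall fun s => norm_nonneg _) hP.norm

lemma decayConv_tendsto {P : ℝ → ℂ}
    (hP : IntervalIntegrable P volume 0 Real.pi)
    {t : ℝ} (ht : t ∈ Set.Icc 0 Real.pi) :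
    Filter.Tendsto (fun y => decayConv P y t) Filter.atTop (nhds 0) := by
  have h1 := (hP.norm.sub_pi le_rfl ht.1 ht.2)
  have := intervalIntegral.tendsto_integral_filter_of_dominated_convergence
    (l := Filter.atTop) (μ := volume) (a := 0) (b := t)
    (F := fun y s => Real.exp (-(2 * y * (t - s))) * ‖P s‖) (f := fun _ => (0 : ℝ))
    (fun s => ‖P s‖) ?_ ?_ h1 ?_
  · simpa [decayConv] using this
  · refine Filter.Eventually.of_forall fun y => ?_
    have : IntervalIntegrable (fun s => Real.exp (-(2 * y * (t - s))) * ‖P s‖) volume 0 t :=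
      h1.continuousOn_mul (by fun_prop)
    exact this.def'.aestronglyMeasurable
  · filter_upwards [Filter.eventually_ge_atTop 0] with y hy
    refine Filter.Eventually.of_forall fun s hs => ?_
    rw [Set.uIoc_of_le ht.1] at hs
    rw [Real.norm_of_nonneg (by positivity)]
    refine mul_le_of_le_one_left (norm_nonneg _) (Real.exp_le_one_iff.2 ?_)
    have := mul_nonneg hy (sub_nonneg.2 hs.2)
    linarith
  · filter_upwards [Measure.ae_ne volume t] with s hst hs
    rw [Set.uIoc_of_le ht.1] at hs
    have hlt : 0 < t - s := sub_pos.2 (lt_of_le_of_ne hs.2 hst)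
    have h3 : Filter.Tendsto (fun y : ℝ => (2 * (t - s)) * y) Filter.atTop Filter.atTop :=
      Filter.tendsto_id.const_mul_atTop (by positivity)
    have h4 := (Real.tendsto_exp_neg_atTop_nhds_zero.comp h3).mul_const ‖P s‖
    rw [zero_mul] at h4
    refine h4.congr fun y => ?_
    simp only [Function.comp]
    congr 3; ring

lemma contraction_tendsto {P Q : ℝ → ℂ}
    (hP : IntervalIntegrable P volume 0 Real.pi)
    (hQ : IntervalIntegrable Q volume 0 Real.pi) :
    Filter.Tendsto (contraction P Q) Filter.atTop (nhds 0) := by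
  have := intervalIntegral.tendsto_integral_filter_of_dominated_convergence
    (l := Filter.atTop) (μ := volume) (a := 0) (b := Real.pi)
    (F := fun y t => ‖Q t‖ * decayConv P y t) (f := fun _ => (0 : ℝ))
    (fun t => ‖Q t‖ * ∫ s in (0 : ℝ)..Real.pi, ‖P s‖) ?_ ?_ (hQ.norm.mul_const _) ?_
  · rw [intervalIntegral.integral_zero] at this
    exact this
  · refine Filter.Eventually.of_forall fun y => ?_
    exact (hQ.norm.mul_continuousOn (decayConv_continuousOn hP y)).def'.aestronglyMeasurable
  · filter_upwards [Filter.eventually_ge_atTop 0] with y hy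
    refine Filter.Eventually.of_forall fun t ht => ?_
    rw [Set.uIoc_of_le Real.pi_pos.le] at ht
    rw [norm_mul, norm_norm, Real.norm_of_nonneg (decayConv_nonneg P y ht.1.le)]
    exact mul_le_mul_of_nonneg_left (decayConv_le hP hy ⟨ht.1.le, ht.2⟩) (norm_nonneg _)
  · refine Filter.Eventually.of_forall fun t ht => ?_
    rw [Set.uIoc_of_le Real.pi_pos.le] at ht
    simpa using (decayConv_tendsto hP ⟨ht.1.le, ht.2⟩).const_mul ‖Q t‖

/-! ### Bounds on the iterated integrals -/

lemma pIter_continuousOn {P Q : ℝ → ℂ}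
    (hP : IntervalIntegrable P volume 0 Real.pi)
    (hQ : IntervalIntegrable Q volume 0 Real.pi)
    (lam : ℂ) (n : ℕ) :
    ContinuousOn (pIter P Q lam n) (Set.uIcc 0 Real.pi) := by
  induction n with
  | zero =>
    exact continuousOn_primitive_pi (hP.continuousOn_mul (by fun_prop))
  | succ n ih =>
    have h1 : IntervalIntegrable (fun t : ℝ => Complex.exp (2 * Complex.I * lam * (t : ℂ)) * Q t *
        pIter P Q lam n t) volume 0 Real.pi :=
      (hQ.continuousOn_mul (by fun_prop)).mul_continuousOn ih
    have h2 := continuousOn_primitive_pi h1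
    exact continuousOn_primitive_pi ((hP.continuousOn_mul (by fun_prop)).mul_continuousOn h2)

lemma pIter_integrable {P Q : ℝ → ℂ}
    (hP : IntervalIntegrable P volume 0 Real.pi)
    (hQ : IntervalIntegrable Q volume 0 Real.pi)
    (lam : ℂ) (n : ℕ) :
    IntervalIntegrable (fun t : ℝ => Complex.exp (2 * Complex.I * lam * (t : ℂ)) * Q t *
        pIter P Q lam n t) volume 0 Real.pi :=
  (hQ.continuousOn_mul (by fun_prop)).mul_continuousOn (pIter_continuousOn hP hQ lam n)

/-- The inner integral in `pₙ₊₁` is at most `κ(y)ⁿ ∫₀^s |Q| E_y ≤ κ(y)ⁿ⁺¹`, which leaves the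
integral defining `E_y` to be done on the outside. -/
lemma norm_pIter_le {P Q : ℝ → ℂ}
    (hP : IntervalIntegrable P volume 0 Real.pi)
    (hQ : IntervalIntegrable Q volume 0 Real.pi)
    (lam : ℂ) (n : ℕ) {t : ℝ} (ht : t ∈ Set.Icc 0 Real.pi) :
    ‖pIter P Q lam n t‖ ≤
      contraction P Q lam.im ^ n * (Real.exp (2 * lam.im * t) * decayConv P lam.im t) := by
  have hk : 0 ≤ contraction P Q lam.im := intervalIntegral.integral_nonneg Real.pi_pos.le
    fun s hs => mul_nonneg (norm_nonneg _) (decayConv_nonneg P _ hs.1)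
  have hE : ∀ t, Real.exp (2 * lam.im * t) * decayConv P lam.im t =
      ∫ s in (0 : ℝ)..t, Real.exp (2 * lam.im * s) * ‖P s‖ := fun t => by
    rw [decayConv_eq, ← mul_assoc, ← Real.exp_add]; simp
  induction n generalizing t with
  | zero =>
    rw [pow_zero, one_mul, hE, pIter]
    refine (intervalIntegral.norm_integral_le_integral_norm ht.1).trans_eq ?_
    simp only [norm_mul, norm_exp_neg]
  | succ n ih =>
    rw [hE, ← intervalIntegral.integral_const_mul, pIter]
    refine intervalIntegral.norm_integral_le_of_norm_le ht.1 ?_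
      (((hP.norm.sub_pi le_rfl ht.1 ht.2).continuousOn_mul (by fun_prop)).const_mul _)
    refine Filter.Eventually.of_forall fun s hs => ?_
    rw [norm_mul, norm_mul, norm_exp_neg, mul_comm]
    refine mul_le_mul_of_nonneg_right ?_ (by positivity)
    have hsπ := hs.2.trans ht.2
    have hint : IntervalIntegrable (fun r => contraction P Q lam.im ^ n *
        (‖Q r‖ * decayConv P lam.im r)) volume 0 Real.pi :=
      (hQ.norm.mul_continuousOn (decayConv_continuousOn hP _)).const_mul _
    calc _ ≤ ∫ r in (0 : ℝ)..s, contraction P Q lam.im ^ n * (‖Q r‖ * decayConv P lam.im r) := by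
          refine intervalIntegral.norm_integral_le_of_norm_le hs.1.le ?_
            (hint.sub_pi le_rfl hs.1.le hsπ)
          refine Filter.Eventually.of_forall fun r hr => ?_
          rw [norm_mul, norm_mul, norm_exp_pos]
          refine (mul_le_mul_of_nonneg_left (ih ⟨hr.1.le, hr.2.trans hsπ⟩)
            (by positivity)).trans_eq ?_
          have : Real.exp (-(2 * lam.im * r)) * Real.exp (2 * lam.im * r) = 1 := by
            rw [← Real.exp_add]; simp
          linear_combination (‖Q r‖ * contraction P Q lam.im ^ n * decayConv P lam.im r) * this
      _ ≤ ∫ r in (0 : ℝ)..Real.pi, contraction P Q lam.im ^ n *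
            (‖Q r‖ * decayConv P lam.im r) := by
          refine intervalIntegral.integral_mono_interval le_rfl hs.1.le hsπ ?_ hint
          refine (ae_restrict_iff' measurableSet_Ioc).2 (Filter.Eventually.of_forall fun r hr => ?_)
          exact mul_nonneg (pow_nonneg hk _)
            (mul_nonneg (norm_nonneg _) (decayConv_nonneg P _ hr.1.le))
      _ = contraction P Q lam.im ^ (n + 1) := by
          rw [intervalIntegral.integral_const_mul, pow_succ, contraction]

/-- After exchanging the two outer integrals in `pₙ₊₁(π,λ)`, a uniform bound `B` on the tails
`∫_t^π e^{-2iλs} P(s) ds` factors out. -/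
lemma norm_pIter_succ_le {P Q : ℝ → ℂ}
    (hP : IntervalIntegrable P volume 0 Real.pi)
    (hQ : IntervalIntegrable Q volume 0 Real.pi)
    (lam : ℂ) (n : ℕ) {B : ℝ}
    (hR : ∀ t ∈ Set.Icc 0 Real.pi,
      ‖∫ s in t..Real.pi, Complex.exp (-(2 * Complex.I * lam * (s : ℂ))) * P s‖ ≤ B) :
    ‖pIter P Q lam (n + 1) Real.pi‖ ≤ B * contraction P Q lam.im ^ (n + 1) := by
  rw [pIter, integral_triangle_swap Real.pi_pos.le (hP.continuousOn_mul (by fun_prop))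
    (pIter_integrable hP hQ lam n)]
  have hint : IntervalIntegrable (fun r => (B * contraction P Q lam.im ^ n) *
      (‖Q r‖ * decayConv P lam.im r)) volume 0 Real.pi :=
    (hQ.norm.mul_continuousOn (decayConv_continuousOn hP _)).const_mul _
  refine (intervalIntegral.norm_integral_le_of_norm_le Real.pi_pos.le
    (Filter.Eventually.of_forall fun r hr => ?_) hint).trans_eq ?_
  · have hr' : r ∈ Set.Icc 0 Real.pi := ⟨hr.1.le, hr.2⟩
    rw [norm_mul, norm_mul, norm_mul, norm_exp_pos]
    refine (mul_le_mul (mul_le_mul_of_nonneg_left (norm_pIter_le hP hQ lam n hr')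
      (by positivity)) (hR r hr') (norm_nonneg _) ?_).trans_eq ?_
    · exact mul_nonneg (by positivity) ((norm_nonneg _).trans (norm_pIter_le hP hQ lam n hr'))
    · have : Real.exp (-(2 * lam.im * r)) * Real.exp (2 * lam.im * r) = 1 := by
        rw [← Real.exp_add]; simp
      linear_combination (‖Q r‖ * contraction P Q lam.im ^ n * decayConv P lam.im r * B) * this
  · rw [intervalIntegral.integral_const_mul, pow_succ, contraction]; ring

/-! ### The tail integral near the right end point -/

/-- The asymptotic hypothesis controls `t` near `π`; away from `π` the bound holds because
`(π - t)^ρ` is bounded below and `P` is integrable. -/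
lemma tail_primitive_le {P : ℝ → ℂ} (hP : IntervalIntegrable P volume 0 Real.pi)
    {ρ : ℝ} (hρ : 0 < ρ) {ν : ℂ}
    (hlim : Filter.Tendsto
      (fun h : ℝ => (∫ x in Real.pi - h..Real.pi, P x) / ((h ^ ρ : ℝ) : ℂ))
      (nhdsWithin 0 (Set.Ioi 0)) (nhds ν)) :
    ∃ C : ℝ, 0 ≤ C ∧ ∀ t ∈ Set.Icc 0 Real.pi,
      ‖∫ x in t..Real.pi, P x‖ ≤ C * (Real.pi - t) ^ ρ := by
  have h1 : ∀ᶠ h in nhdsWithin (0 : ℝ) (Set.Ioi 0),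
      ‖(∫ x in Real.pi - h..Real.pi, P x) / ((h ^ ρ : ℝ) : ℂ)‖ < ‖ν‖ + 1 :=
    hlim.norm.eventually_lt_const (by linarith)
  obtain ⟨h₀, hh₀, hb⟩ := mem_nhdsGT_iff_exists_Ioo_subset.1 h1
  have hh₀' : 0 < h₀ := hh₀
  set A := ∫ x in (0 : ℝ)..Real.pi, ‖P x‖ with hA
  have hA0 : 0 ≤ A := intervalIntegral.integral_nonneg Real.pi_pos.le fun _ _ => norm_nonneg _
  have hp0 : 0 < h₀ ^ ρ := Real.rpow_pos_of_pos hh₀' _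
  refine ⟨(‖ν‖ + 1) + A / h₀ ^ ρ, by positivity, fun t ht => ?_⟩
  have hnn : 0 ≤ (Real.pi - t) ^ ρ := Real.rpow_nonneg (sub_nonneg.2 ht.2) _
  rw [add_mul]
  rcases ht.2.eq_or_lt with rfl | hlt
  · simp only [intervalIntegral.integral_same, norm_zero]; positivity
  rcases lt_or_ge (Real.pi - t) h₀ with hs | hs
  · have h2 := hb ⟨sub_pos.2 hlt, hs⟩
    have hpos : 0 < (Real.pi - t) ^ ρ := Real.rpow_pos_of_pos (sub_pos.2 hlt) _
    simp only [Set.mem_ofPred_eq, sub_sub_cancel, norm_div, Complex.norm_real,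
      Real.norm_of_nonneg hnn] at h2
    rw [div_lt_iff₀ hpos] at h2
    have : 0 ≤ A / h₀ ^ ρ * (Real.pi - t) ^ ρ := by positivity
    linarith
  · have h3 : ‖∫ x in t..Real.pi, P x‖ ≤ A :=
      (intervalIntegral.norm_integral_le_integral_norm ht.2).trans
        (intervalIntegral.integral_mono_interval ht.1 ht.2 le_rfl
          (Filter.Eventually.of_forall fun s => norm_nonneg _) hP.norm)
    have h4 : h₀ ^ ρ ≤ (Real.pi - t) ^ ρ := Real.rpow_le_rpow hh₀'.le hs hρ.le
    have h5 : A ≤ A / h₀ ^ ρ * (Real.pi - t) ^ ρ := by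
      rw [div_mul_eq_mul_div, le_div_iff₀ hp0]
      exact mul_le_mul_of_nonneg_left h4 hA0
    have : 0 ≤ (‖ν‖ + 1) * (Real.pi - t) ^ ρ := by positivity
    linarith

/-- Obtained by raising `x ≤ e^x`, at `x = yu/ρ`, to the power `ρ`. -/
lemma rpow_le_exp {ρ y u : ℝ} (hρ : 0 < ρ) (hy : 0 < y) (hu : 0 ≤ u) :
    u ^ ρ ≤ ρ ^ ρ / y ^ ρ * Real.exp (y * u) := by
  have h1 : y * u / ρ ≤ Real.exp (y * u / ρ) := by
    linarith [Real.add_one_le_exp (y * u / ρ)]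
  have h2 := Real.rpow_le_rpow (by positivity) h1 hρ.le
  rw [← Real.exp_mul, div_mul_cancel₀ _ hρ.ne', Real.div_rpow (by positivity) hρ.le,
    Real.mul_rpow hy.le hu, div_le_iff₀ (by positivity)] at h2
  rw [div_mul_eq_mul_div, le_div_iff₀ (by positivity)]
  linarith

/-- Integration by parts against the merely absolutely continuous function `r ↦ ∫_r^π P`. -/
lemma tail_parts {P : ℝ → ℂ} (hP : IntervalIntegrable P volume 0 Real.pi) (lam : ℂ)
    {t : ℝ} (ht : t ∈ Set.Icc 0 Real.pi) :
    ∫ s in t..Real.pi, Complex.exp (-(2 * Complex.I * lam * (s : ℂ))) * P s =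
      Complex.exp (-(2 * Complex.I * lam * (t : ℂ))) * (∫ s in t..Real.pi, P s) +
      ∫ r in t..Real.pi, (Complex.exp (-(2 * Complex.I * lam * (r : ℂ))) *
        (-(2 * Complex.I * lam))) * ∫ s in r..Real.pi, P s := by
  have hPt := hP.sub_pi ht.1 ht.2 le_rfl
  have hder : ∀ r : ℝ, HasDerivAt (fun r : ℝ => Complex.exp (-(2 * Complex.I * lam * (r : ℂ))))
      (Complex.exp (-(2 * Complex.I * lam * (r : ℂ))) * (-(2 * Complex.I * lam))) r := by
    intro r
    have h1 : HasDerivAt (fun r : ℝ => -(2 * Complex.I * lam * (r : ℂ)))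
        (-(2 * Complex.I * lam * 1)) r :=
      ((Complex.ofRealCLM.hasDerivAt (x := r)).const_mul _).neg
    rw [mul_one] at h1
    exact h1.cexp
  have hint : ∀ a b, IntervalIntegrable (fun r : ℝ =>
      Complex.exp (-(2 * Complex.I * lam * (r : ℂ))) * (-(2 * Complex.I * lam))) volume a b :=
    fun a b => Continuous.intervalIntegrable (by fun_prop) _ _
  rw [← integral_triangle_swap ht.2 hPt (hint _ _), ← intervalIntegral.integral_const_mul,
    ← intervalIntegral.integral_add (hPt.const_mul _)]
  · congr 1; ext s
    rw [intervalIntegral.integral_eq_sub_of_hasDerivAt (fun r _ => hder r) (hint _ _)]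
    ring
  · refine hPt.mul_continuousOn ?_
    exact intervalIntegral.continuousOn_primitive_interval' (hint _ _) Set.left_mem_uIcc

/-- The key estimate `|∫_t^π e^{-2iλs} P(s) ds| = O(y^{-ρ} e^{2πy})`, uniformly in `t ∈ [0,π]`
and in all `λ` with `|λ| ≤ M y`, where `y = Im λ > 0`. -/
lemma norm_tail_le {P : ℝ → ℂ} (hP : IntervalIntegrable P volume 0 Real.pi)
    {ρ C M : ℝ} (hρ : 0 < ρ) (hC : 0 ≤ C)
    (hF : ∀ t ∈ Set.Icc 0 Real.pi, ‖∫ x in t..Real.pi, P x‖ ≤ C * (Real.pi - t) ^ ρ)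
    {lam : ℂ} (hy : 0 < lam.im) (hM : ‖lam‖ ≤ M * lam.im)
    {t : ℝ} (ht : t ∈ Set.Icc 0 Real.pi) :
    ‖∫ s in t..Real.pi, Complex.exp (-(2 * Complex.I * lam * (s : ℂ))) * P s‖ ≤
      C * ρ ^ ρ * (1 + 2 * M) / lam.im ^ ρ * Real.exp (2 * Real.pi * lam.im) := by
  set y := lam.im with hydef
  have hyρ : 0 < y ^ ρ := Real.rpow_pos_of_pos hy _
  set D := C * (ρ ^ ρ / y ^ ρ) with hD
  have hD0 : 0 ≤ D := by positivity
  -- Half of the decay `e^{-2y(π-r)}` absorbs the factor `(π-r)^ρ`, at the cost of `ρ^ρ y^{-ρ}`;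
  -- the other half keeps the integral over `r` of order `1/y`, which compensates the factor `|λ|`.
  have hF' : ∀ r ∈ Set.Icc 0 Real.pi, Real.exp (2 * y * r) * ‖∫ x in r..Real.pi, P x‖ ≤
      D * (Real.exp (y * Real.pi) * Real.exp (y * r)) := by
    intro r hr
    calc _ ≤ Real.exp (2 * y * r) * (C * (ρ ^ ρ / y ^ ρ * Real.exp (y * (Real.pi - r)))) := by
          gcongr
          refine (hF r hr).trans ?_
          gcongr
          exact rpow_le_exp hρ hy (sub_nonneg.2 hr.2)
      _ = D * (Real.exp (2 * y * r) * Real.exp (y * (Real.pi - r))) := by rw [hD]; ring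
      _ = _ := by rw [← Real.exp_add, ← Real.exp_add]; congr 2; ring
  have hee : Real.exp (y * Real.pi) * Real.exp (y * Real.pi) = Real.exp (2 * Real.pi * y) := by
    rw [← Real.exp_add]; congr 1; ring
  have hT1 : ‖Complex.exp (-(2 * Complex.I * lam * (t : ℂ))) * (∫ s in t..Real.pi, P s)‖ ≤
      D * Real.exp (2 * Real.pi * y) := by
    rw [norm_mul, norm_exp_neg, ← hee]
    refine (hF' t ht).trans ?_
    have := ht.2
    gcongr
  have hder : ∀ r : ℝ, HasDerivAt (fun r : ℝ => Real.exp (y * r) / y) (Real.exp (y * r)) r := by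
    intro r
    have h := (((hasDerivAt_id r).const_mul y).exp).div_const y
    simpa [hy.ne'] using h
  have hI : ∫ r in t..Real.pi, Real.exp (y * r) ≤ Real.exp (y * Real.pi) / y := by
    rw [intervalIntegral.integral_eq_sub_of_hasDerivAt (fun r _ => hder r)
      (Continuous.intervalIntegrable (by fun_prop) _ _)]
    have : 0 ≤ Real.exp (y * t) / y := by positivity
    linarith
  have hT2 : ‖∫ r in t..Real.pi, (Complex.exp (-(2 * Complex.I * lam * (r : ℂ))) *
        (-(2 * Complex.I * lam))) * ∫ s in r..Real.pi, P s‖ ≤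
      2 * M * D * Real.exp (2 * Real.pi * y) := by
    calc _ ≤ ∫ r in t..Real.pi, (2 * ‖lam‖ * D * Real.exp (y * Real.pi)) * Real.exp (y * r) := by
          refine intervalIntegral.norm_integral_le_of_norm_le ht.2 ?_
            (Continuous.intervalIntegrable (by fun_prop) _ _)
          refine Filter.Eventually.of_forall fun r hr => ?_
          have h := hF' r ⟨ht.1.trans hr.1.le, hr.2⟩
          rw [norm_mul, norm_mul, norm_exp_neg, norm_neg, norm_mul, norm_mul, Complex.norm_I,
            Complex.norm_ofNat]
          have h2 := mul_le_mul_of_nonneg_left h (by positivity : 0 ≤ 2 * ‖lam‖)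
          linarith
      _ ≤ (2 * ‖lam‖ * D * Real.exp (y * Real.pi)) * (Real.exp (y * Real.pi) / y) := by
          rw [intervalIntegral.integral_const_mul]
          gcongr
      _ = 2 * (‖lam‖ / y) * D * Real.exp (2 * Real.pi * y) := by rw [← hee]; ring
      _ ≤ _ := by
          have : ‖lam‖ / y ≤ M := (div_le_iff₀ hy).2 hM
          gcongr
  rw [tail_parts hP lam ht]
  refine (norm_add_le _ _).trans ((add_le_add hT1 hT2).trans_eq ?_)
  rw [hD]; ring

lemma sector_norm_le {ε : ℝ} (hε : 0 < ε) (hε' : ε < Real.pi / 10) {lam : ℂ}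
    (h1 : ε ≤ lam.arg) (h2 : lam.arg ≤ Real.pi - ε) :
    ‖lam‖ ≤ (Real.sin ε)⁻¹ * lam.im := by
  have hs : 0 < Real.sin ε := Real.sin_pos_of_pos_of_lt_pi hε (by linarith [Real.pi_pos])
  have hsin : Real.sin ε ≤ Real.sin lam.arg := by
    rcases le_total lam.arg (Real.pi / 2) with h | h
    · exact Real.sin_le_sin_of_le_of_le_pi_div_two (by linarith) h h1
    · rw [← Real.sin_pi_sub lam.arg]
      exact Real.sin_le_sin_of_le_of_le_pi_div_two (by linarith) (by linarith) (by linarith)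
  rw [inv_mul_eq_div, le_div_iff₀ hs, ← Complex.norm_mul_sin_arg lam]
  exact mul_le_mul_of_nonneg_left hsin (norm_nonneg _)

/-! ### Conclusion -/

/-- Formula (52) of Lemma 4: if `P, Q ∈ L¹(0,π)`, `ρ > 0`, and
`lim_{h→0⁺} (∫_{π-h}^π P)/h^ρ = ν ≠ 0`, then
`∑_{n=1}^∞ |pₙ(π,λ)| = e^{2π|Im λ|} o(1)/|Im λ|^ρ` uniformly in the sector
`Ω_ε⁺ = {ε ≤ arg λ ≤ π - ε}` as `|Im λ| → ∞`. -/
theorem pIter_tail_sum_upper_sector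
    (P Q : ℝ → ℂ)
    (hP : IntervalIntegrable P MeasureTheory.volume 0 Real.pi)
    (hQ : IntervalIntegrable Q MeasureTheory.volume 0 Real.pi)
    (ρ : ℝ) (hρ : 0 < ρ) (ν : ℂ) (hν : ν ≠ 0)
    (hlim : Filter.Tendsto
      (fun h : ℝ => (∫ x in Real.pi - h..Real.pi, P x) / ((h ^ ρ : ℝ) : ℂ))
      (nhdsWithin 0 (Set.Ioi 0)) (nhds ν))
    (ε : ℝ) (hε : 0 < ε) (hε' : ε < Real.pi / 10) :
    ∀ δ > (0 : ℝ), ∃ C : ℝ, ∀ lam : ℂ,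
      ε ≤ lam.arg → lam.arg ≤ Real.pi - ε → C ≤ |lam.im| →
        |lam.im| ^ ρ * Real.exp (-(2 * Real.pi * |lam.im|)) *
          (∑' n : ℕ, ‖pIter P Q lam (n + 1) Real.pi‖) ≤ δ := by
  intro δ hδ
  obtain ⟨C, hC, hF⟩ := tail_primitive_le hP hρ hlim
  have hs : 0 < Real.sin ε := Real.sin_pos_of_pos_of_lt_pi hε (by linarith [Real.pi_pos])
  set K := C * ρ ^ ρ * (1 + 2 * (Real.sin ε)⁻¹) with hK
  have hK0 : 0 ≤ K := by positivity
  have hev := (contraction_tendsto hP hQ).eventually_lt_const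
    (u := min (1 / 2) (δ / (2 * (K + 1)))) (by positivity)
  obtain ⟨Y, hY⟩ := Filter.eventually_atTop.1 hev
  refine ⟨max Y 1, fun lam h1 h2 hlam => ?_⟩
  have hnorm := sector_norm_le hε hε' h1 h2
  have him0 : 0 ≤ lam.im := by
    have := (norm_nonneg _).trans hnorm
    exact nonneg_of_mul_nonneg_right this (inv_pos.2 hs)
  rw [abs_of_nonneg him0] at hlam ⊢
  have hy : 0 < lam.im := lt_of_lt_of_le one_pos ((le_max_right _ _).trans hlam)
  have hk := hY lam.im ((le_max_left _ _).trans hlam)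
  set k := contraction P Q lam.im with hkdef
  have hk0 : 0 ≤ k := intervalIntegral.integral_nonneg Real.pi_pos.le
    fun s hs => mul_nonneg (norm_nonneg _) (decayConv_nonneg P _ hs.1)
  have hk1 : k < 1 / 2 := hk.trans_le (min_le_left _ _)
  have hk2 : k < δ / (2 * (K + 1)) := hk.trans_le (min_le_right _ _)
  have hyρ : 0 < lam.im ^ ρ := Real.rpow_pos_of_pos hy _
  set B := K / lam.im ^ ρ * Real.exp (2 * Real.pi * lam.im) with hB
  have hterm : ∀ n, ‖pIter P Q lam (n + 1) Real.pi‖ ≤ B * k ^ (n + 1) := fun n =>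
    norm_pIter_succ_le hP hQ lam n fun t ht => norm_tail_le hP hρ hC hF hy hnorm ht
  have hgeo : HasSum (fun n => B * k ^ (n + 1)) (B * (k * (1 - k)⁻¹)) := by
    have := ((hasSum_geometric_of_lt_one hk0 (by linarith)).mul_left k).mul_left B
    simpa only [pow_succ'] using this
  have hsum : ∑' n : ℕ, ‖pIter P Q lam (n + 1) Real.pi‖ ≤ B * (k * (1 - k)⁻¹) := by
    rw [← hgeo.tsum_eq]
    exact (Summable.of_nonneg_of_le (fun _ => norm_nonneg _) hterm hgeo.summable).tsum_le_tsum
      hterm hgeo.summable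
  have hinv : (1 - k)⁻¹ ≤ 2 := by
    rw [inv_le_comm₀ (by linarith) (by norm_num)]; linarith
  calc _ ≤ lam.im ^ ρ * Real.exp (-(2 * Real.pi * lam.im)) * (B * (k * (1 - k)⁻¹)) := by gcongr
    _ = K * k * (1 - k)⁻¹ := by
        rw [hB, Real.exp_neg]; field_simp
    _ ≤ K * k * 2 := by gcongr
    _ ≤ δ := by
        rw [lt_div_iff₀ (by positivity)] at hk2
        linarith
end
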